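/- arXiv:2603.29823 — 2 statements merged into one kernel-verified Lean document; each statement's English description precedes it below -/
import Mathlib

section
/- Let s ∈ (0,1), u ∈ C_c^∞(ℝⁿ), and let U be its Caffarelli–Silvestre extension. Assume ∫₀^∞∫_{ℝⁿ} z^{1−2s} ( |∇_x² U(x,z)|² + |∇_x ∂_z U(x,z)|² ) dx dz < ∞. Define Γ₂(u)(x) := ½ Λ^s( Γ₁(u,u) )(x) − Γ₁(u, Λ^s u)(x). Then for every x ∈ ℝⁿ, Γ₂(u)(x) = β_s ∫₀^∞ ( P_z^{(s)} ∗ ( B_z + G_z ) )(x) z^{1−2s} dz, where for each fixed z > 0 and y ∈ ℝⁿ one sets B_z(y) := ½ Λ^s( |∇_x U(·,z)|² )(y) − ∇_x U(y,z) · ∇_x( Λ^s U(·,z) )(y) and G_z(y) := Γ₁( ∂_z U(·,z), ∂_z U(·,z) )(y), with Λ^s and Γ₁ acting in the horizontal variable on each slice. -/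
open MeasureTheory Filter Set
open scoped Topology ENNReal NNReal

noncomputable section

/-- `ℝⁿ` with the Euclidean norm. -/
abbrev En (n : ℕ) := EuclideanSpace ℝ (Fin n)

/-- The normalizing constant `p(n,s) = Γ(n/2+s)/(π^{n/2} Γ(s))` of the Poisson kernel. -/
def pns (n : ℕ) (s : ℝ) : ℝ :=
  Real.Gamma ((n : ℝ) / 2 + s) / (Real.pi ^ ((n : ℝ) / 2) * Real.Gamma s)

/-- The fractional Poisson kernel `P_z^{(s)}(x) = p(n,s) z^{2s} (|x|² + z²)^{-(n+2s)/2}`. -/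
def Pker (n : ℕ) (s z : ℝ) (x : En n) : ℝ :=
  pns n s * z ^ (2 * s) * (‖x‖ ^ 2 + z ^ 2) ^ (-((n : ℝ) + 2 * s) / 2)

/-- Convolution with the fractional Poisson kernel in the first variable, at fixed `z`. -/
def Pconv (n : ℕ) (s z : ℝ) (f : En n → ℝ) (x : En n) : ℝ :=
  ∫ y, Pker n s z (x - y) * f y

/-- The Caffarelli–Silvestre extension `U(x,z) = (P_z^{(s)} ∗ u)(x)`. -/
def CSext (n : ℕ) (s : ℝ) (u : En n → ℝ) (x : En n) (z : ℝ) : ℝ :=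
  Pconv n s z u x

/-- The constant `C(n,s) = 4^s Γ(n/2+s) / (π^{n/2} |Γ(-s)|)`. -/
def Cns (n : ℕ) (s : ℝ) : ℝ :=
  4 ^ s * Real.Gamma ((n : ℝ) / 2 + s) / (Real.pi ^ ((n : ℝ) / 2) * |Real.Gamma (-s)|)

/-- The fractional Laplacian `(-Δ)^s w(x)` as a principal-value singular integral. -/
def fracLap (n : ℕ) (s : ℝ) (w : En n → ℝ) (x : En n) : ℝ :=
  Cns n s * limUnder (𝓝[>] (0 : ℝ))
    (fun ε : ℝ => ∫ y in {y : En n | ε < ‖x - y‖}, (w x - w y) / ‖x - y‖ ^ ((n : ℝ) + 2 * s))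

/-- `Λ^s w := -(-Δ)^s w`. -/
def Lam (n : ℕ) (s : ℝ) (w : En n → ℝ) (x : En n) : ℝ := - fracLap n s w x

/-- The first-order carré du champ `Γ₁(u,v) = ½(Λ^s(uv) - u Λ^s v - v Λ^s u)`. -/
def Gamma1 (n : ℕ) (s : ℝ) (u v : En n → ℝ) (x : En n) : ℝ :=
  (Lam n s (fun y => u y * v y) x - u x * Lam n s v x - v x * Lam n s u x) / 2

/-- The constant `β_s = 2^{2s-1} Γ(s)/Γ(1-s)`. -/
def betaS (s : ℝ) : ℝ := 2 ^ (2 * s - 1) * Real.Gamma s / Real.Gamma (1 - s)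

/-- Partial derivative in the `i`-th coordinate direction. -/
def pd {n : ℕ} (i : Fin n) (f : En n → ℝ) (x : En n) : ℝ :=
  fderiv ℝ f x (EuclideanSpace.single i 1)

/-- The Laplacian in the `x`-variables. -/
def lapX {n : ℕ} (f : En n → ℝ) (x : En n) : ℝ := ∑ i, pd i (pd i f) x

/-- The degenerate operator `L_s W = div_{x,z}(z^{1-2s} ∇̃W)`, written out as
`z^{1-2s} Δ_x W + ∂_z(z^{1-2s} ∂_z W)`. -/
def LsOp {n : ℕ} (s : ℝ) (W : En n → ℝ → ℝ) (x : En n) (z : ℝ) : ℝ :=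
  z ^ (1 - 2 * s) * lapX (fun y => W y z) x
    + deriv (fun t => t ^ (1 - 2 * s) * deriv (W x) t) z

/-!
Write `U`, `V` for the extensions of `u`, `v` and put `F = U V`. The flux
`P_z ∗ (z^{1-2s} ∂_z F) - (z^{1-2s} ∂_z P_z) ∗ F` tends to `-2 β_s⁻¹ Γ₁(u,v)` as `z → 0⁺`, because
`z^{1-2s} ∂_z` of an extension tends to `β_s⁻¹ Λ^s` of its boundary value, and to `0` as `z → ∞`.
By the extension equation its `z`-derivative is `2 z^{1-2s} P_z ∗ (∇_{x,z} U · ∇_{x,z} V)`. Hence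
`Γ₁(u,v) = β_s ∫₀^∞ P_z ∗ (∇_{x,z} U · ∇_{x,z} V) z^{1-2s} dz`.

Apply this to `(u, u)` and to `(u, Λ^s u)`. Since `Λ^s` commutes with `P_z ∗ ·`, with the
derivatives of the extension and with the integral over `z`, the formula for `Γ₂` follows from the
identity `½ Λ^s |∇_{x,z} U|² - ∇_{x,z} U · ∇_{x,z} Λ^s U = B_z + G_z` on each slice.
-/

/-! ### Functions with bounded partial derivatives -/

section BoundedPartials

variable {n : ℕ}

/-- The class `C_b^k(ℝⁿ)` with a common bound: `w` has continuous partial derivatives up to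
order `k`, all of them bounded by `M`. The explicit `M` is what makes dominated convergence
available for families of such functions. -/
def BddPartials : ℕ → ℝ → (En n → ℝ) → Prop
  | 0, M, w => Continuous w ∧ ∀ x, ‖w x‖ ≤ M
  | k + 1, M, w => Differentiable ℝ w ∧ (∀ x, ‖w x‖ ≤ M) ∧ ∀ i, BddPartials k M (pd i w)

theorem pd_const (c : ℝ) (i : Fin n) : pd i (fun _ : En n => c) = fun _ => 0 := by
  funext x
  simp only [pd, fderiv_fun_const, Pi.zero_apply, zero_apply]

theorem pd_add {f g : En n → ℝ} (hf : Differentiable ℝ f) (hg : Differentiable ℝ g) (i : Fin n) :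
    pd i (fun x => f x + g x) = fun x => pd i f x + pd i g x := by
  funext x
  rw [pd, fderiv_fun_add (hf x) (hg x)]
  rfl

theorem pd_mul {f g : En n → ℝ} (hf : Differentiable ℝ f) (hg : Differentiable ℝ g) (i : Fin n) :
    pd i (fun x => f x * g x) = fun x => f x * pd i g x + pd i f x * g x := by
  funext x
  rw [pd, fderiv_fun_mul (hf x) (hg x), mul_comm (pd i f x)]
  rfl

theorem pd_const_mul {f : En n → ℝ} (hf : Differentiable ℝ f) (c : ℝ) (i : Fin n) :
    pd i (fun x => c * f x) = fun x => c * pd i f x := by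
  funext x
  rw [pd, fderiv_const_mul (hf x)]
  rfl

theorem pd_comp_add_right (f : En n → ℝ) (c : En n) (i : Fin n) :
    pd i (fun x => f (x + c)) = fun x => pd i f (x + c) := by
  funext x
  rw [pd, fderiv_comp_add_right, pd]

theorem clm_eq_sum_smul_proj (L : En n →L[ℝ] ℝ) :
    L = ∑ i, L (EuclideanSpace.single i 1) • (EuclideanSpace.proj i : En n →L[ℝ] ℝ) := by
  ext v
  have hv : v = ∑ i, v i • EuclideanSpace.single i (1 : ℝ) := by
    simpa using ((EuclideanSpace.basisFun (Fin n) ℝ).sum_repr v).symm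
  conv_lhs => rw [hv, map_sum]
  simp [mul_comm]

theorem clm_norm_le {L : En n →L[ℝ] ℝ} {M : ℝ}
    (hL : ∀ i, ‖L (EuclideanSpace.single i 1)‖ ≤ M) : ‖L‖ ≤ n * M := by
  have hproj (i : Fin n) : ‖(EuclideanSpace.proj i : En n →L[ℝ] ℝ)‖ ≤ 1 :=
    ContinuousLinearMap.opNorm_le_bound _ zero_le_one fun v => by
      simpa using PiLp.norm_apply_le v i
  rw [clm_eq_sum_smul_proj L]
  calc ‖∑ i, L (EuclideanSpace.single i 1) • (EuclideanSpace.proj i : En n →L[ℝ] ℝ)‖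
      ≤ ∑ _i : Fin n, M := norm_sum_le_of_le _ fun i _ => by
        rw [norm_smul]
        exact (mul_le_of_le_one_right (norm_nonneg _) (hproj i)).trans (hL i)
    _ = n * M := by simp

namespace BddPartials

variable {k l : ℕ} {M N : ℝ} {f g w : En n → ℝ}

theorem norm_le (hw : BddPartials k M w) (x : En n) : ‖w x‖ ≤ M := by
  cases k with
  | zero => exact hw.2 x
  | succ k => exact hw.2.1 x

theorem nonneg (hw : BddPartials k M w) : 0 ≤ M :=
  (norm_nonneg _).trans (hw.norm_le 0)

theorem differentiable (hw : BddPartials (k + 1) M w) : Differentiable ℝ w := hw.1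

theorem continuous (hw : BddPartials k M w) : Continuous w := by
  cases k with
  | zero => exact hw.1
  | succ k => exact hw.differentiable.continuous

theorem pd (hw : BddPartials (k + 1) M w) (i : Fin n) : BddPartials k M (pd i w) := hw.2.2 i

theorem of_succ (hw : BddPartials (k + 1) M w) : BddPartials k M w := by
  induction k generalizing w with
  | zero => exact ⟨hw.continuous, hw.norm_le⟩
  | succ k ih => exact ⟨hw.differentiable, hw.norm_le, fun i => ih (hw.pd i)⟩

theorem of_le (hw : BddPartials k M w) (hlk : l ≤ k) : BddPartials l M w := by
  induction k, hlk using Nat.le_induction with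
  | base => exact hw
  | succ k _ ih => exact ih hw.of_succ

theorem mono (hw : BddPartials k M w) (hMN : M ≤ N) : BddPartials k N w := by
  induction k generalizing w with
  | zero => exact ⟨hw.continuous, fun x => (hw.norm_le x).trans hMN⟩
  | succ k ih =>
    exact ⟨hw.differentiable, fun x => (hw.norm_le x).trans hMN, fun i => ih (hw.pd i)⟩

theorem zero : BddPartials k 0 (fun _ : En n => (0 : ℝ)) := by
  induction k with
  | zero => exact ⟨continuous_const, by simp⟩
  | succ k ih =>
    refine ⟨differentiable_const _, by simp, fun i => ?_⟩
    rwa [pd_const]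

theorem add (hf : BddPartials k M f) (hg : BddPartials k N g) :
    BddPartials k (M + N) (fun x => f x + g x) := by
  induction k generalizing f g with
  | zero =>
    exact ⟨hf.continuous.add hg.continuous,
      fun x => norm_add_le_of_le (hf.norm_le x) (hg.norm_le x)⟩
  | succ k ih =>
    refine ⟨hf.differentiable.add hg.differentiable,
      fun x => norm_add_le_of_le (hf.norm_le x) (hg.norm_le x), fun i => ?_⟩
    rw [pd_add hf.differentiable hg.differentiable]
    exact ih (hf.pd i) (hg.pd i)

theorem const_mul (hf : BddPartials k M f) (c : ℝ) :
    BddPartials k (‖c‖ * M) (fun x => c * f x) := by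
  induction k generalizing f with
  | zero =>
    exact ⟨continuous_const.mul hf.continuous, fun x => norm_mul_le_of_le le_rfl (hf.norm_le x)⟩
  | succ k ih =>
    refine ⟨hf.differentiable.const_mul c, fun x => norm_mul_le_of_le le_rfl (hf.norm_le x),
      fun i => ?_⟩
    rw [pd_const_mul hf.differentiable]
    exact ih (hf.pd i)

theorem mul (hf : BddPartials k M f) (hg : BddPartials k N g) :
    BddPartials k (2 ^ k * (M * N)) (fun x => f x * g x) := by
  induction k generalizing f g with
  | zero =>
    rw [pow_zero, one_mul]
    exact ⟨hf.continuous.mul hg.continuous,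
      fun x => norm_mul_le_of_le (hf.norm_le x) (hg.norm_le x)⟩
  | succ k ih =>
    refine ⟨hf.differentiable.mul hg.differentiable,
      fun x => (norm_mul_le_of_le (hf.norm_le x) (hg.norm_le x)).trans
        (le_mul_of_one_le_left (mul_nonneg hf.nonneg hg.nonneg) (one_le_pow₀ one_le_two)),
      fun i => ?_⟩
    rw [pd_mul hf.differentiable hg.differentiable, pow_succ, mul_two, add_mul]
    exact (ih hf.of_succ (hg.pd i)).add (ih (hf.pd i) hg.of_succ)

theorem sum {ι : Type*} (S : Finset ι) {f : ι → En n → ℝ} (hf : ∀ i, BddPartials k M (f i)) :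
    BddPartials k (S.card * M) (fun x => ∑ i ∈ S, f i x) := by
  classical
  induction S using Finset.induction_on with
  | empty => simpa using BddPartials.zero
  | insert a S ha ih =>
    simp only [Finset.sum_insert ha, Finset.card_insert_of_notMem ha]
    convert (hf a).add ih using 1
    push_cast
    ring

theorem comp_add_right (hf : BddPartials k M f) (c : En n) :
    BddPartials k M (fun x => f (x + c)) := by
  induction k generalizing f with
  | zero => exact ⟨hf.continuous.comp (continuous_add_const c), fun x => hf.norm_le _⟩
  | succ k ih =>
    refine ⟨hf.differentiable.comp (differentiable_id.add_const c), fun x => hf.norm_le _,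
      fun i => ?_⟩
    rw [pd_comp_add_right]
    exact ih (hf.pd i)

theorem comp_sub_right (hf : BddPartials k M f) (c : En n) :
    BddPartials k M (fun x => f (x - c)) := by
  simpa only [sub_eq_add_neg] using hf.comp_add_right (-c)

theorem exists_of_iteratedFDeriv_le (hf : ContDiff ℝ k f)
    (hbound : ∀ j ≤ k, ∃ C, ∀ x, ‖iteratedFDeriv ℝ j f x‖ ≤ C) : ∃ M, BddPartials k M f := by
  obtain ⟨C, hC⟩ := hbound 0 (Nat.zero_le k)
  simp only [norm_iteratedFDeriv_zero] at hC
  induction k generalizing f C with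
  | zero => exact ⟨C, hf.continuous, hC⟩
  | succ k ih =>
    have hf' : ContDiff ℝ k (fderiv ℝ f) := hf.fderiv_right (by norm_cast)
    have hpd (i : Fin n) : ∃ M, BddPartials k M (_root_.pd i f) := by
      have hpdBound (j : ℕ) (hj : j ≤ k) :
          ∃ C, ∀ x, ‖iteratedFDeriv ℝ j (_root_.pd i f) x‖ ≤ C := by
        obtain ⟨D, hD⟩ := hbound (j + 1) (Nat.succ_le_succ hj)
        refine ⟨‖EuclideanSpace.single i (1 : ℝ)‖ * D, fun x =>
          (norm_iteratedFDeriv_clm_apply_const hf'.contDiffAt (by exact_mod_cast hj)).trans ?_⟩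
        rw [norm_iteratedFDeriv_fderiv]
        exact mul_le_mul_of_nonneg_left (hD x) (norm_nonneg _)
      obtain ⟨D, hD⟩ := hpdBound 0 (Nat.zero_le k)
      simp only [norm_iteratedFDeriv_zero] at hD
      exact ih (hf'.clm_apply contDiff_const) hpdBound D hD
    choose M hM using hpd
    refine ⟨max C (∑ i, |M i|), hf.differentiable (by simp), fun x => (hC x).trans
      (le_max_left _ _), fun i => (hM i).mono (le_max_of_le_right ?_)⟩
    exact (le_abs_self _).trans (Finset.single_le_sum (f := fun i => |M i|)
      (fun _ _ => abs_nonneg _) (Finset.mem_univ i))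

theorem norm_fderiv_le (hw : BddPartials 1 M w) (x : En n) : ‖fderiv ℝ w x‖ ≤ n * M :=
  clm_norm_le fun i => (hw.pd i).norm_le x

theorem norm_sub_le (hw : BddPartials 1 M w) (x y : En n) : ‖w x - w y‖ ≤ n * M * ‖x - y‖ :=
  convex_univ.norm_image_sub_le_of_norm_fderiv_le (𝕜 := ℝ) (fun x _ => hw.differentiable x)
    (fun x _ => hw.norm_fderiv_le x) (mem_univ _) (mem_univ _)

theorem norm_fderiv_sub_le (hw : BddPartials 2 M w) (x y : En n) :
    ‖fderiv ℝ w x - fderiv ℝ w y‖ ≤ n * (n * M * ‖x - y‖) :=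
  clm_norm_le fun i => (hw.pd i).norm_sub_le x y

end BddPartials

end BoundedPartials

/-! ### Differentiation under the integral sign -/

section ParametricIntegral

variable {n k : ℕ} {α : Type*} [MeasurableSpace α] {μ : Measure α} {f : α → En n → ℝ} {g : α → ℝ}

theorem aestronglyMeasurable_pd (hm : ∀ x, AEStronglyMeasurable (fun a => f a x) μ)
    (hd : ∀ᵐ a ∂μ, Differentiable ℝ (f a)) (i : Fin n) (x : En n) :
    AEStronglyMeasurable (fun a => pd i (f a) x) μ := by
  refine aestronglyMeasurable_of_tendsto_ae (𝓝[≠] (0 : ℝ))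
    (f := fun t a => t⁻¹ • (f a (x + t • EuclideanSpace.single i 1) - f a x))
    (fun t => ((hm _).sub (hm x)).const_smul t⁻¹) ?_
  filter_upwards [hd] with a ha
  exact ((ha x).hasFDerivAt.hasLineDerivAt _).tendsto_slope_zero

theorem aestronglyMeasurable_fderiv (hm : ∀ x, AEStronglyMeasurable (fun a => f a x) μ)
    (hd : ∀ᵐ a ∂μ, Differentiable ℝ (f a)) (x : En n) :
    AEStronglyMeasurable (fun a => fderiv ℝ (f a) x) μ := by
  have hsum (a : α) : fderiv ℝ (f a) x =
      ∑ i, pd i (f a) x • (EuclideanSpace.proj i : En n →L[ℝ] ℝ) := clm_eq_sum_smul_proj _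
  simp only [hsum]
  exact Finset.aestronglyMeasurable_fun_sum _ fun i _ =>
    (aestronglyMeasurable_pd hm hd i x).smul_const _

theorem hasFDerivAt_integral_of_bddPartials
    (hm : ∀ x, AEStronglyMeasurable (fun a => f a x) μ)
    (hf : ∀ᵐ a ∂μ, BddPartials 1 (g a) (f a)) (hg : Integrable g μ) (x : En n) :
    HasFDerivAt (fun x => ∫ a, f a x ∂μ) (∫ a, fderiv ℝ (f a) x ∂μ) x := by
  refine hasFDerivAt_integral_of_dominated_of_fderiv_le (s := univ) (bound := fun a => n * g a)
    (F := fun x a => f a x) (F' := fun x a => fderiv ℝ (f a) x) univ_mem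
    (Eventually.of_forall hm) ?_
    (aestronglyMeasurable_fderiv hm (hf.mono fun a ha => ha.differentiable) x) ?_
    (hg.const_mul _) ?_
  · exact hg.mono' (hm x) (hf.mono fun a ha => ha.norm_le x)
  · exact hf.mono fun a ha x _ => ha.norm_fderiv_le x
  · exact hf.mono fun a ha x _ => (ha.differentiable x).hasFDerivAt

theorem pd_integral (hm : ∀ x, AEStronglyMeasurable (fun a => f a x) μ)
    (hf : ∀ᵐ a ∂μ, BddPartials 1 (g a) (f a)) (hg : Integrable g μ) (i : Fin n) :
    pd i (fun x => ∫ a, f a x ∂μ) = fun x => ∫ a, pd i (f a) x ∂μ := by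
  funext x
  have hint : Integrable (fun a => fderiv ℝ (f a) x) μ :=
    (hg.const_mul n).mono'
      (aestronglyMeasurable_fderiv hm (hf.mono fun a ha => ha.differentiable) x)
      (hf.mono fun a ha => ha.norm_fderiv_le x)
  rw [pd, (hasFDerivAt_integral_of_bddPartials hm hf hg x).fderiv,
    ContinuousLinearMap.integral_apply hint]
  rfl

theorem BddPartials.integral (hm : ∀ x, AEStronglyMeasurable (fun a => f a x) μ)
    (hf : ∀ᵐ a ∂μ, BddPartials k (g a) (f a)) (hg : Integrable g μ) :
    BddPartials k (∫ a, g a ∂μ) (fun x => ∫ a, f a x ∂μ) := by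
  induction k generalizing f with
  | zero =>
    exact ⟨continuous_of_dominated hm (fun x => hf.mono fun a ha => ha.norm_le x) hg
      (hf.mono fun a ha => ha.continuous),
      fun x => norm_integral_le_of_norm_le hg (hf.mono fun a ha => ha.norm_le x)⟩
  | succ k ih =>
    have hf1 : ∀ᵐ a ∂μ, BddPartials 1 (g a) (f a) := hf.mono fun a ha => ha.of_le (by omega)
    refine ⟨fun x => (hasFDerivAt_integral_of_bddPartials hm hf1 hg x).differentiableAt,
      fun x => norm_integral_le_of_norm_le hg (hf.mono fun a ha => ha.norm_le x), fun i => ?_⟩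
    rw [pd_integral hm hf1 hg]
    exact ih (aestronglyMeasurable_pd hm (hf1.mono fun a ha => ha.differentiable) i)
      (hf.mono fun a ha => ha.pd i)

end ParametricIntegral

/-! ### Mean differences and the fractional Laplacian -/

section MeanDiff

variable {n k : ℕ} {M : ℝ} {w : En n → ℝ}

/-- The symmetric difference `(w(x+h) + w(x-h))/2 - w(x)`, which is of second order in `h`. -/
def meanDiff (w : En n → ℝ) (x h : En n) : ℝ := (w (x + h) + w (x - h)) / 2 - w x

theorem meanDiff_zero (w : En n → ℝ) (x : En n) : meanDiff w x 0 = 0 := by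
  simp [meanDiff]

theorem meanDiff_add (f g : En n → ℝ) (x h : En n) :
    meanDiff (fun x => f x + g x) x h = meanDiff f x h + meanDiff g x h := by
  simp only [meanDiff]
  ring

theorem meanDiff_const_mul (c : ℝ) (f : En n → ℝ) (x h : En n) :
    meanDiff (fun x => c * f x) x h = c * meanDiff f x h := by
  simp only [meanDiff]
  ring

theorem meanDiff_comp_sub_right (w : En n → ℝ) (c x h : En n) :
    meanDiff (fun x => w (x - c)) x h = meanDiff w (x - c) h := by
  simp only [meanDiff, add_sub_right_comm, sub_right_comm]

theorem continuous_meanDiff (hw : Continuous w) (x : En n) : Continuous (meanDiff w x) := by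
  unfold meanDiff
  fun_prop

theorem differentiable_meanDiff (hw : Differentiable ℝ w) (h : En n) :
    Differentiable ℝ (fun x => meanDiff w x h) := by
  unfold meanDiff
  fun_prop

theorem pd_meanDiff (hw : Differentiable ℝ w) (h : En n) (i : Fin n) :
    pd i (fun x => meanDiff w x h) = fun x => meanDiff (pd i w) x h := by
  have hshift (c : En n) : Differentiable ℝ (fun x => w (x + c)) := by fun_prop
  have hadd : Differentiable ℝ (fun x => w (x + h) + w (x + -h)) := by fun_prop
  have hsum : (fun x => meanDiff w x h) =
      fun x => (1 / 2) * (w (x + h) + w (x + -h)) + (-1) * w x := by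
    funext x
    rw [meanDiff, sub_eq_add_neg x]
    ring
  rw [hsum, pd_add (hadd.const_mul _) (hw.const_mul _), pd_const_mul hadd,
    pd_add (hshift h) (hshift (-h)), pd_const_mul hw, pd_comp_add_right, pd_comp_add_right]
  funext x
  rw [meanDiff, sub_eq_add_neg x]
  ring

theorem BddPartials.norm_meanDiff_le_two_mul (hw : BddPartials k M w) (x h : En n) :
    ‖meanDiff w x h‖ ≤ 2 * M := by
  have hadd := abs_le.1 (hw.norm_le (x + h))
  have hsub := abs_le.1 (hw.norm_le (x - h))
  have hx := abs_le.1 (hw.norm_le x)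
  rw [meanDiff, Real.norm_eq_abs, abs_le]
  constructor <;> linarith

theorem BddPartials.norm_meanDiff_le_sq (hw : BddPartials 2 M w) (x h : En n) :
    ‖meanDiff w x h‖ ≤ n ^ 2 * M * ‖h‖ ^ 2 := by
  have hderiv (t : ℝ) : HasDerivAt (fun t : ℝ => (w (x + t • h) + w (x - t • h)) / 2)
      ((fderiv ℝ w (x + t • h) h + fderiv ℝ w (x - t • h) (-h)) / 2) t := by
    have hplus : HasDerivAt (fun t : ℝ => x + t • h) h t := by
      simpa using ((hasDerivAt_id t).smul_const h).const_add x
    have hminus : HasDerivAt (fun t : ℝ => x - t • h) (-h) t := by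
      simpa using ((hasDerivAt_id t).smul_const h).const_sub x
    exact (((hw.differentiable (x + t • h)).hasFDerivAt.comp_hasDerivAt t hplus).add
      ((hw.differentiable (x - t • h)).hasFDerivAt.comp_hasDerivAt t hminus)).div_const 2
  have hbound (t : ℝ) (ht : t ∈ Ico (0 : ℝ) 1) :
      ‖(fderiv ℝ w (x + t • h) h + fderiv ℝ w (x - t • h) (-h)) / 2‖ ≤ n ^ 2 * M * ‖h‖ ^ 2 := by
    have hdist : ‖x + t • h - (x - t • h)‖ ≤ 2 * ‖h‖ := by
      rw [show x + t • h - (x - t • h) = (2 * t) • h by module, norm_smul,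
        Real.norm_of_nonneg (by linarith [ht.1])]
      exact mul_le_mul_of_nonneg_right (by linarith [ht.2]) (norm_nonneg h)
    have hM := hw.nonneg
    rw [map_neg, ← sub_eq_add_neg, ← sub_apply, norm_div, Real.norm_two]
    calc ‖(fderiv ℝ w (x + t • h) - fderiv ℝ w (x - t • h)) h‖ / 2
        ≤ (n * (n * M * (2 * ‖h‖))) * ‖h‖ / 2 := by
          refine div_le_div_of_nonneg_right (ContinuousLinearMap.le_of_opNorm_le _ ?_ h) two_pos.le
          exact (hw.norm_fderiv_sub_le _ _).trans (by gcongr)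
      _ = n ^ 2 * M * ‖h‖ ^ 2 := by ring
  simpa [meanDiff] using norm_image_sub_le_of_norm_deriv_le_segment_01'
    (fun t _ => (hderiv t).hasDerivWithinAt) hbound

theorem BddPartials.norm_meanDiff_le (hw : BddPartials 2 M w) (x h : En n) :
    ‖meanDiff w x h‖ ≤ M * ((n ^ 2 + 2) * min 1 (‖h‖ ^ 2)) := by
  have hM := hw.nonneg
  have hn : 0 ≤ M * (n : ℝ) ^ 2 := by positivity
  rcases min_cases (1 : ℝ) (‖h‖ ^ 2) with ⟨hmin, _⟩ | ⟨hmin, _⟩ <;> rw [hmin]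
  · linarith [hw.norm_meanDiff_le_two_mul x h]
  · have hh : 0 ≤ M * ‖h‖ ^ 2 := by positivity
    linarith [hw.norm_meanDiff_le_sq x h]

theorem BddPartials.meanDiff (hw : BddPartials (k + 2) M w) (h : En n) :
    BddPartials k (M * ((n ^ 2 + 2) * min 1 (‖h‖ ^ 2))) (fun x => meanDiff w x h) := by
  induction k generalizing w with
  | zero =>
    exact ⟨(differentiable_meanDiff hw.differentiable h).continuous,
      fun x => hw.norm_meanDiff_le x h⟩
  | succ k ih =>
    refine ⟨differentiable_meanDiff hw.differentiable h,
      fun x => (hw.of_le (by omega)).norm_meanDiff_le x h, fun i => ?_⟩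
    rw [pd_meanDiff hw.differentiable]
    exact ih (hw.pd i)

end MeanDiff

section LevyKernel

variable {n : ℕ} {s c ε : ℝ} {K : En n → ℝ}

/-- The Lévy kernel `|h|^{-n-2s}` of the fractional Laplacian, without its normalizing constant. -/
def levyKernel (n : ℕ) (s : ℝ) (h : En n) : ℝ := ‖h‖ ^ (-((n : ℝ) + 2 * s))

/-- An integrable function bounding `|h|^{-n-2s}` times the mean difference of a function whose
partial derivatives up to order two are bounded by `1`. -/
def levyMajorant (n : ℕ) (s : ℝ) (h : En n) : ℝ :=
  (n ^ 2 + 2) * min 1 (‖h‖ ^ 2) * levyKernel n s h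

/-- Kernels dominated by `c |h|^{-n-2s}` away from the origin, i.e. those whose integrals against
mean differences converge. -/
structure IsLevyDominated (s c : ℝ) (K : En n → ℝ) : Prop where
  aestronglyMeasurable : AEStronglyMeasurable K volume
  norm_le : ∀ h, h ≠ 0 → ‖K h‖ ≤ c * levyKernel n s h

theorem levyKernel_nonneg (n : ℕ) (s : ℝ) (h : En n) : 0 ≤ levyKernel n s h :=
  Real.rpow_nonneg (norm_nonneg _) _

theorem measurable_levyKernel (n : ℕ) (s : ℝ) : Measurable (levyKernel n s) :=
  measurable_norm.pow_const _

theorem isLevyDominated_levyKernel : IsLevyDominated s 1 (levyKernel n s) where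
  aestronglyMeasurable := (measurable_levyKernel n s).aestronglyMeasurable
  norm_le h _ := by rw [one_mul, Real.norm_of_nonneg (levyKernel_nonneg n s h)]

theorem IsLevyDominated.indicator (hK : IsLevyDominated s c K) {S : Set (En n)}
    (hS : MeasurableSet S) : IsLevyDominated s c (S.indicator K) where
  aestronglyMeasurable := hK.aestronglyMeasurable.indicator hS
  norm_le h hh := (norm_indicator_le_norm_self _ _).trans (hK.norm_le h hh)

theorem levyMajorant_nonneg (n : ℕ) (s : ℝ) (h : En n) : 0 ≤ levyMajorant n s h := by
  have := levyKernel_nonneg n s h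
  unfold levyMajorant
  positivity

theorem integrableOn_min_one_sq_mul_rpow (hs : s ∈ Ioo (0 : ℝ) 1) :
    IntegrableOn (fun r : ℝ => min 1 (r ^ 2) * r ^ (-1 - 2 * s)) (Ioi 0) := by
  rw [← Ioc_union_Ioi_eq_Ioi zero_le_one]
  refine IntegrableOn.union ?_ ?_
  · have hpow : IntegrableOn (fun r : ℝ => r ^ (1 - 2 * s)) (Ioc 0 1) :=
      (intervalIntegrable_iff_integrableOn_Ioc_of_le zero_le_one).1
        (intervalIntegral.intervalIntegrable_rpow' (by linarith [hs.2]))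
    refine hpow.congr_fun (fun r hr => ?_) measurableSet_Ioc
    dsimp only
    rw [min_eq_right (pow_le_one₀ hr.1.le hr.2), ← Real.rpow_natCast, ← Real.rpow_add hr.1]
    congr 1
    push_cast
    ring
  · refine (integrableOn_Ioi_rpow_of_lt (by linarith [hs.1] : -1 - 2 * s < -1) one_pos).congr_fun
      (fun r hr => ?_) measurableSet_Ioi
    dsimp only
    rw [min_eq_left (one_le_pow₀ (mem_Ioi.1 hr).le), one_mul]

theorem integrable_levyMajorant (n : ℕ) (hs : s ∈ Ioo (0 : ℝ) 1) :
    Integrable (levyMajorant n s) := by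
  rcases n.eq_zero_or_pos with rfl | hn
  · exact Integrable.of_finite
  have : NeZero n := ⟨hn.ne'⟩
  refine (integrable_fun_norm_addHaar (E := En n) volume
    (f := fun r : ℝ => (n ^ 2 + 2) * min 1 (r ^ 2) * r ^ (-((n : ℝ) + 2 * s)))).2 ?_
  refine IntegrableOn.congr_fun
    ((integrableOn_min_one_sq_mul_rpow hs).const_mul ((n : ℝ) ^ 2 + 2)) (fun r hr => ?_)
    measurableSet_Ioi
  have hexp : r ^ (-1 - 2 * s) = r ^ (n - 1) * r ^ (-((n : ℝ) + 2 * s)) := by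
    rw [← Real.rpow_natCast, ← Real.rpow_add hr, Nat.cast_sub hn, Nat.cast_one]
    congr 1
    ring
  rw [finrank_euclideanSpace_fin, smul_eq_mul, hexp]
  ring

theorem integrable_indicator_levyKernel (n : ℕ) (hs : s ∈ Ioo (0 : ℝ) 1) (hε : 0 < ε) :
    Integrable ({h : En n | ε < ‖h‖}.indicator (levyKernel n s)) := by
  have hmeas : MeasurableSet {h : En n | ε < ‖h‖} :=
    measurableSet_lt measurable_const measurable_norm
  have hmin : 0 < min 1 (ε ^ 2) := lt_min one_pos (by positivity)
  rw [integrable_indicator_iff hmeas]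
  refine ((integrable_levyMajorant n hs).const_mul (min 1 (ε ^ 2))⁻¹).integrableOn.mono'
    (measurable_levyKernel n s).aestronglyMeasurable
    ((ae_restrict_iff' hmeas).2 (Eventually.of_forall fun h hh => ?_))
  have hle : min 1 (ε ^ 2) ≤ (n ^ 2 + 2) * min 1 (‖h‖ ^ 2) :=
    (min_le_min_left _ (pow_le_pow_left₀ hε.le (le_of_lt hh) 2)).trans
      (le_mul_of_one_le_left (by positivity) (by linarith [sq_nonneg (n : ℝ)]))
  rw [Real.norm_of_nonneg (levyKernel_nonneg n s h), levyMajorant, ← mul_assoc]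
  refine le_mul_of_one_le_left (levyKernel_nonneg n s h) ?_
  rwa [inv_mul_eq_div, one_le_div hmin]

end LevyKernel

section MeanDiffInt

variable {n k : ℕ} {s c M : ℝ} {K w : En n → ℝ}

/-- The integral of the mean differences of `w` against the kernel `K`. The operator `Λ^s` and,
for even kernels, `w ↦ K ∗ w - (∫ K) w` are of this form. -/
def meanDiffInt (K w : En n → ℝ) (x : En n) : ℝ := ∫ h, K h * meanDiff w x h

theorem IsLevyDominated.bddPartials (hK : IsLevyDominated s c K) (hw : BddPartials (k + 2) M w)
    (h : En n) : BddPartials k (c * M * levyMajorant n s h) (fun x => K h * meanDiff w x h) := by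
  by_cases hh : h = 0
  · subst hh
    have hmaj : levyMajorant n s 0 = 0 := by simp [levyMajorant]
    simpa only [meanDiff_zero, mul_zero, hmaj] using BddPartials.zero
  · refine ((hw.meanDiff h).const_mul (K h)).mono ?_
    have hM := hw.nonneg
    calc ‖K h‖ * (M * ((n ^ 2 + 2) * min 1 (‖h‖ ^ 2)))
        ≤ (c * levyKernel n s h) * (M * ((n ^ 2 + 2) * min 1 (‖h‖ ^ 2))) := by
          gcongr
          exact hK.norm_le h hh
      _ = c * M * levyMajorant n s h := by
          unfold levyMajorant
          ring

theorem IsLevyDominated.aestronglyMeasurable_mul_meanDiff (hK : IsLevyDominated s c K)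
    (hw : Continuous w) (x : En n) :
    AEStronglyMeasurable (fun h => K h * meanDiff w x h) volume :=
  hK.aestronglyMeasurable.mul (continuous_meanDiff hw x).aestronglyMeasurable

theorem IsLevyDominated.integrable_mul_meanDiff (hs : s ∈ Ioo (0 : ℝ) 1)
    (hK : IsLevyDominated s c K) (hw : BddPartials 2 M w) (x : En n) :
    Integrable (fun h => K h * meanDiff w x h) :=
  ((integrable_levyMajorant n hs).const_mul (c * M)).mono'
    (hK.aestronglyMeasurable_mul_meanDiff hw.continuous x)
    (Eventually.of_forall fun h => (hK.bddPartials (k := 0) hw h).norm_le x)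

theorem BddPartials.meanDiffInt (hs : s ∈ Ioo (0 : ℝ) 1) (hK : IsLevyDominated s c K)
    (hw : BddPartials (k + 2) M w) :
    BddPartials k (c * M * ∫ h, levyMajorant n s h) (meanDiffInt K w) := by
  rw [← integral_const_mul]
  exact BddPartials.integral (hK.aestronglyMeasurable_mul_meanDiff hw.continuous)
    (Eventually.of_forall (hK.bddPartials hw)) ((integrable_levyMajorant n hs).const_mul _)

theorem tendsto_meanDiffInt {ι : Type*} {l : Filter ι} [l.IsCountablyGenerated]
    {K' : ι → En n → ℝ} {w' : ι → En n → ℝ} (hs : s ∈ Ioo (0 : ℝ) 1)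
    (hK' : ∀ᶠ a in l, IsLevyDominated s c (K' a)) (hw' : ∀ᶠ a in l, BddPartials 2 M (w' a))
    (hKlim : ∀ h, h ≠ 0 → Tendsto (fun a => K' a h) l (𝓝 (K h)))
    (hwlim : ∀ x, Tendsto (fun a => w' a x) l (𝓝 (w x))) (x : En n) :
    Tendsto (fun a => meanDiffInt (K' a) (w' a) x) l (𝓝 (meanDiffInt K w x)) := by
  refine tendsto_integral_filter_of_dominated_convergence (fun h => c * M * levyMajorant n s h)
    ?_ ?_ ((integrable_levyMajorant n hs).const_mul _) (Eventually.of_forall fun h => ?_)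
  · filter_upwards [hK', hw'] with a hK hw
    exact hK.aestronglyMeasurable_mul_meanDiff hw.continuous x
  · filter_upwards [hK', hw'] with a hK hw
    exact Eventually.of_forall fun h => (hK.bddPartials (k := 0) hw h).norm_le x
  · by_cases hh : h = 0
    · simp only [hh, meanDiff_zero, mul_zero, tendsto_const_nhds]
    · exact (hKlim h hh).mul ((((hwlim _).add (hwlim _)).div_const 2).sub (hwlim x))

theorem integral_mul_sub_eq_meanDiffInt (hK : Integrable K) (heven : ∀ h, K (-h) = K h)
    (hw : BddPartials k M w) (x : En n) :
    ∫ h, K h * (w (x - h) - w x) = meanDiffInt K w x := by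
  have hint : Integrable (fun h => K h * (w (x - h) - w x)) := by
    refine hK.mul_bdd (c := M + M) ?_ (Eventually.of_forall fun h =>
      norm_sub_le_of_le (hw.norm_le _) (hw.norm_le _))
    have := hw.continuous
    exact Continuous.aestronglyMeasurable (by fun_prop)
  have hreflect : ∫ h, K h * (w (x + h) - w x) = ∫ h, K h * (w (x - h) - w x) := by
    simpa only [heven, sub_neg_eq_add] using
      integral_neg_eq_self (fun h => K h * (w (x - h) - w x)) volume
  have hint' : Integrable (fun h => K h * (w (x + h) - w x)) := by
    simpa only [heven, sub_neg_eq_add] using hint.comp_neg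
  calc ∫ h, K h * (w (x - h) - w x)
      = ((∫ h, K h * (w (x + h) - w x)) + ∫ h, K h * (w (x - h) - w x)) / 2 := by
        rw [hreflect]
        ring
    _ = ∫ h, (K h * (w (x + h) - w x) + K h * (w (x - h) - w x)) / 2 := by
        rw [← integral_add hint' hint, integral_div]
    _ = meanDiffInt K w x := by
        refine integral_congr_ae (Eventually.of_forall fun h => ?_)
        simp only [meanDiff]
        ring

theorem setIntegral_fracLap_eq_meanDiffInt (hs : s ∈ Ioo (0 : ℝ) 1) {ε : ℝ} (hε : 0 < ε)
    (hw : BddPartials k M w) (x : En n) :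
    ∫ y in {y : En n | ε < ‖x - y‖}, (w x - w y) / ‖x - y‖ ^ ((n : ℝ) + 2 * s) =
      -meanDiffInt ({h : En n | ε < ‖h‖}.indicator (levyKernel n s)) w x := by
  have hmeas : MeasurableSet {y : En n | ε < ‖x - y‖} :=
    measurableSet_lt measurable_const (by fun_prop)
  rw [← integral_mul_sub_eq_meanDiffInt (integrable_indicator_levyKernel n hs hε)
      (fun h => by simp [indicator, levyKernel]) hw,
    ← integral_sub_left_eq_self _ volume x, ← integral_neg, ← integral_indicator hmeas]
  refine integral_congr_ae (Eventually.of_forall fun y => ?_)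
  simp only [indicator, mem_ofPred_eq, sub_sub_cancel, levyKernel, Real.rpow_neg (norm_nonneg _)]
  split_ifs <;> ring

theorem Lam_eq_meanDiffInt (hs : s ∈ Ioo (0 : ℝ) 1) (hw : BddPartials 2 M w) :
    Lam n s w = fun x => Cns n s * meanDiffInt (levyKernel n s) w x := by
  funext x
  have hmeas (ε : ℝ) : MeasurableSet {h : En n | ε < ‖h‖} :=
    measurableSet_lt measurable_const measurable_norm
  have hindicator (h : En n) (hh : h ≠ 0) :
      Tendsto (fun ε => {h : En n | ε < ‖h‖}.indicator (levyKernel n s) h) (𝓝[>] (0 : ℝ))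
        (𝓝 (levyKernel n s h)) := by
    refine tendsto_const_nhds.congr' ?_
    filter_upwards [mem_nhdsWithin_of_mem_nhds (Iio_mem_nhds (norm_pos_iff.2 hh))] with ε hε
    exact (indicator_of_mem (mem_ofPred_eq ▸ hε) _).symm
  have hlim : Tendsto (fun ε : ℝ => ∫ y in {y : En n | ε < ‖x - y‖},
      (w x - w y) / ‖x - y‖ ^ ((n : ℝ) + 2 * s)) (𝓝[>] (0 : ℝ))
      (𝓝 (-meanDiffInt (levyKernel n s) w x)) := by
    refine Tendsto.congr' ?_ (tendsto_meanDiffInt hs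
      (Eventually.of_forall fun ε => isLevyDominated_levyKernel.indicator (hmeas ε))
      (Eventually.of_forall fun _ => hw) hindicator (fun _ => tendsto_const_nhds) x).neg
    filter_upwards [self_mem_nhdsWithin] with ε hε
    exact (setIntegral_fracLap_eq_meanDiffInt hs hε hw x).symm
  rw [Lam, fracLap, hlim.limUnder_eq, mul_neg, neg_neg]

end MeanDiffInt

section Lam

variable {n k : ℕ} {s M N : ℝ} {w f g : En n → ℝ}

/-- The norm of `Λ^s : C_b^{k+2} → C_b^k` obtained from `levyMajorant`. -/
def lamConst (n : ℕ) (s : ℝ) : ℝ := ‖Cns n s‖ * ∫ h, levyMajorant n s h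

theorem BddPartials.Lam (hs : s ∈ Ioo (0 : ℝ) 1) (hw : BddPartials (k + 2) M w) :
    BddPartials k (lamConst n s * M) (Lam n s w) := by
  rw [Lam_eq_meanDiffInt hs (hw.of_le (by omega))]
  convert (hw.meanDiffInt hs isLevyDominated_levyKernel).const_mul (Cns n s) using 1
  rw [lamConst]
  ring

theorem Lam_add (hs : s ∈ Ioo (0 : ℝ) 1) (hf : BddPartials 2 M f) (hg : BddPartials 2 N g) :
    Lam n s (fun x => f x + g x) = fun x => Lam n s f x + Lam n s g x := by
  funext x
  have hfint := isLevyDominated_levyKernel.integrable_mul_meanDiff hs hf x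
  have hgint := isLevyDominated_levyKernel.integrable_mul_meanDiff hs hg x
  simp only [Lam_eq_meanDiffInt hs hf, Lam_eq_meanDiffInt hs hg,
    Lam_eq_meanDiffInt hs (hf.add hg), meanDiffInt, meanDiff_add, mul_add,
    integral_add hfint hgint]

theorem Lam_const_mul (hs : s ∈ Ioo (0 : ℝ) 1) (hf : BddPartials 2 M f) (c : ℝ) :
    Lam n s (fun x => c * f x) = fun x => c * Lam n s f x := by
  simp only [Lam_eq_meanDiffInt hs hf, Lam_eq_meanDiffInt hs (hf.const_mul c), meanDiffInt,
    meanDiff_const_mul, mul_left_comm _ c, integral_const_mul]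

theorem Lam_comp_sub_right (hs : s ∈ Ioo (0 : ℝ) 1) (hf : BddPartials 2 M f) (c x : En n) :
    Lam n s (fun x => f (x - c)) x = Lam n s f (x - c) := by
  simp only [Lam_eq_meanDiffInt hs hf, Lam_eq_meanDiffInt hs (hf.comp_sub_right c), meanDiffInt,
    meanDiff_comp_sub_right]

end Lam

section LamIntegral

variable {n : ℕ} {s : ℝ} {α : Type*} [MeasurableSpace α] {μ : Measure α}
  {f : α → En n → ℝ} {g : α → ℝ}

theorem meanDiff_integral (hf : ∀ x, Integrable (fun a => f a x) μ) (x h : En n) :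
    meanDiff (fun x => ∫ a, f a x ∂μ) x h = ∫ a, meanDiff (f a) x h ∂μ := by
  simp only [meanDiff]
  have hadd : Integrable (fun a => f a (x + h) + f a (x - h)) μ := (hf _).add (hf _)
  rw [integral_sub (hadd.div_const 2) (hf x), integral_div, integral_add (hf _) (hf _)]

theorem integrable_prod_levyKernel_mul_meanDiff (hs : s ∈ Ioo (0 : ℝ) 1)
    (hm : Measurable (Function.uncurry f)) (hf : ∀ᵐ a ∂μ, BddPartials 2 (g a) (f a))
    (hg : Integrable g μ) (x : En n) :
    Integrable (fun p : α × En n => levyKernel n s p.2 * meanDiff (f p.1) x p.2)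
      (μ.prod volume) := by
  have hslice {φ : α × En n → En n} (hφ : Measurable φ) : Measurable fun p => f p.1 (φ p) :=
    hm.comp (measurable_fst.prodMk hφ)
  have hmeas : Measurable fun p : α × En n => levyKernel n s p.2 * meanDiff (f p.1) x p.2 :=
    ((measurable_levyKernel n s).comp measurable_snd).mul
      ((((hslice (measurable_snd.const_add x)).add (hslice (measurable_snd.const_sub x))).div_const
        2).sub (hslice measurable_const))
  refine (hg.mul_prod (integrable_levyMajorant n hs)).mono' hmeas.aestronglyMeasurable ?_
  filter_upwards [Measure.quasiMeasurePreserving_fst.ae hf] with p hp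
  simpa only [one_mul] using (isLevyDominated_levyKernel.bddPartials (k := 0) hp p.2).norm_le x

theorem integrable_Lam (hs : s ∈ Ioo (0 : ℝ) 1)
    (hm : Measurable (Function.uncurry f)) (hf : ∀ᵐ a ∂μ, BddPartials 2 (g a) (f a))
    (hg : Integrable g μ) (x : En n) : Integrable (fun a => Lam n s (f a) x) μ := by
  refine ((integrable_prod_levyKernel_mul_meanDiff hs hm hf hg x).integral_prod_left.const_mul
    (Cns n s)).congr ?_
  filter_upwards [hf] with a ha
  simp only [Lam_eq_meanDiffInt hs ha, meanDiffInt]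

theorem Lam_integral [SFinite μ] (hs : s ∈ Ioo (0 : ℝ) 1)
    (hm : Measurable (Function.uncurry f)) (hf : ∀ᵐ a ∂μ, BddPartials 2 (g a) (f a))
    (hg : Integrable g μ) (x : En n) :
    Lam n s (fun x => ∫ a, f a x ∂μ) x = ∫ a, Lam n s (f a) x ∂μ := by
  have hmx (x : En n) : AEStronglyMeasurable (fun a => f a x) μ :=
    (hm.comp measurable_prodMk_right).aestronglyMeasurable
  have hint (x : En n) : Integrable (fun a => f a x) μ :=
    hg.mono' (hmx x) (hf.mono fun a ha => ha.norm_le x)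
  have hLam : ∀ᵐ a ∂μ,
      Lam n s (f a) x = Cns n s * ∫ h, levyKernel n s h * meanDiff (f a) x h := by
    filter_upwards [hf] with a ha
    simp only [Lam_eq_meanDiffInt hs ha, meanDiffInt]
  simp only [Lam_eq_meanDiffInt hs (BddPartials.integral hmx hf hg), meanDiffInt]
  rw [integral_congr_ae hLam, integral_const_mul,
    integral_integral_swap (integrable_prod_levyKernel_mul_meanDiff hs hm hf hg x)]
  simp only [meanDiff_integral hint, integral_const_mul]

end LamIntegral

/-! ### Convolutions -/

open scoped Convolution

section Convolution

variable {n k : ℕ} {s M N : ℝ} {K w f g : En n → ℝ}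

theorem convolution_eq_integral_mul (K w : En n → ℝ) (x : En n) :
    (K ⋆ w) x = ∫ y, K y * w (x - y) := rfl

theorem Pconv_eq_convolution (n : ℕ) (s z : ℝ) (f : En n → ℝ) :
    Pconv n s z f = Pker n s z ⋆ f :=
  funext fun _ => (convolution_lsmul_swap (f := Pker n s z)).symm

theorem BddPartials.aestronglyMeasurable_mul_comp_sub (hw : BddPartials k M w)
    (hK : Integrable K) (x : En n) : AEStronglyMeasurable (fun y => K y * w (x - y)) volume := by
  have := hw.continuous
  exact hK.aestronglyMeasurable.mul (Continuous.aestronglyMeasurable (by fun_prop))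

theorem BddPartials.integrable_mul_comp_sub (hw : BddPartials k M w) (hK : Integrable K)
    (x : En n) : Integrable (fun y => K y * w (x - y)) :=
  (hK.norm.mul_const M).mono' (hw.aestronglyMeasurable_mul_comp_sub hK x)
    (Eventually.of_forall fun y => ((hw.comp_sub_right y).const_mul (K y)).norm_le x)

theorem BddPartials.convolution (hw : BddPartials k M w) (hK : Integrable K) :
    BddPartials k ((∫ y, ‖K y‖) * M) (K ⋆ w) := by
  rw [← integral_mul_const]
  exact BddPartials.integral (hw.aestronglyMeasurable_mul_comp_sub hK)
    (Eventually.of_forall fun y => (hw.comp_sub_right y).const_mul (K y)) (hK.norm.mul_const M)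

theorem pd_comp_sub_right (f : En n → ℝ) (c : En n) (i : Fin n) :
    pd i (fun x => f (x - c)) = fun x => pd i f (x - c) := by
  simpa only [sub_eq_add_neg] using pd_comp_add_right f (-c) i

theorem pd_convolution (hw : BddPartials 1 M w) (hK : Integrable K) (i : Fin n) :
    pd i (K ⋆ w) = K ⋆ pd i w := by
  refine (pd_integral (hw.aestronglyMeasurable_mul_comp_sub hK)
    (Eventually.of_forall fun y => (hw.comp_sub_right y).const_mul (K y))
    (hK.norm.mul_const M) i).trans ?_
  funext x
  refine integral_congr_ae (Eventually.of_forall fun y => ?_)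
  dsimp only
  rw [pd_const_mul (hw.comp_sub_right y).differentiable, pd_comp_sub_right]
  rfl

theorem Lam_convolution (hs : s ∈ Ioo (0 : ℝ) 1) (hw : BddPartials 2 M w) (hK : Integrable K)
    (hKm : Measurable K) : Lam n s (K ⋆ w) = K ⋆ Lam n s w := by
  have hm : Measurable (Function.uncurry fun y x => K y * w (x - y)) :=
    (hKm.comp measurable_fst).mul
      (hw.continuous.measurable.comp (measurable_snd.sub measurable_fst))
  funext x
  refine (Lam_integral hs hm (Eventually.of_forall fun y => (hw.comp_sub_right y).const_mul (K y))
    (hK.norm.mul_const M) x).trans ?_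
  refine integral_congr_ae (Eventually.of_forall fun y => ?_)
  simp only [Lam_const_mul hs (hw.comp_sub_right y), Lam_comp_sub_right hs hw]
  rfl

theorem convolution_add_of_bddPartials (hK : Integrable K) (hf : BddPartials k M f)
    (hg : BddPartials k N g) : (K ⋆ fun x => f x + g x) = fun x => (K ⋆ f) x + (K ⋆ g) x := by
  funext x
  simp only [convolution_eq_integral_mul, mul_add]
  exact integral_add (hf.integrable_mul_comp_sub hK x) (hg.integrable_mul_comp_sub hK x)

theorem convolution_const_mul (K f : En n → ℝ) (c : ℝ) :
    (K ⋆ fun x => c * f x) = fun x => c * (K ⋆ f) x := by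
  funext x
  simp only [convolution_eq_integral_mul, mul_left_comm _ c, integral_const_mul]

theorem const_mul_convolution (K f : En n → ℝ) (c : ℝ) :
    ((fun x => c * K x) ⋆ f) = fun x => c * (K ⋆ f) x := by
  funext x
  simp only [convolution_eq_integral_mul, mul_assoc, integral_const_mul]

theorem convolution_eq_meanDiffInt_add (hK : Integrable K) (heven : ∀ h, K (-h) = K h)
    (hw : BddPartials k M w) (x : En n) :
    (K ⋆ w) x = meanDiffInt K w x + (∫ h, K h) * w x := by
  rw [← integral_mul_sub_eq_meanDiffInt hK heven hw, ← integral_mul_const,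
    ← integral_add _ (hK.mul_const _), convolution_eq_integral_mul]
  · simp only [mul_sub, sub_add_cancel]
  · simp only [mul_sub]
    exact (hw.integrable_mul_comp_sub hK x).sub (hK.mul_const (w x))

theorem measurable_uncurry_convolution {K w : ℝ → En n → ℝ}
    (hK : Measurable (Function.uncurry K)) (hw : Measurable (Function.uncurry w)) :
    Measurable (Function.uncurry fun z => K z ⋆ w z) := by
  have hmeas : Measurable fun q : (ℝ × En n) × En n => K q.1.1 q.2 * w q.1.1 (q.1.2 - q.2) :=
    (hK.comp (measurable_fst.fst.prodMk measurable_snd)).mul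
      (hw.comp (measurable_fst.fst.prodMk (measurable_fst.snd.sub measurable_snd)))
  exact hmeas.stronglyMeasurable.integral_prod_right.measurable

theorem pd_convolution_eq_convolution_pd {i : Fin n} (hKd : Differentiable ℝ K)
    (hK : Integrable K) (hK' : Integrable (pd i K)) (hw : BddPartials 1 M w) :
    pd i K ⋆ w = K ⋆ pd i w := by
  funext x
  have hpd (y : En n) : fderiv ℝ (fun y => w (x - y)) y (EuclideanSpace.single i 1) =
      -pd i w (x - y) := by
    have := (hw.differentiable (x - y)).hasFDerivAt.comp y ((hasFDerivAt_id y).const_sub x)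
    rw [show fderiv ℝ (fun y => w (x - y)) y = _ from this.fderiv]
    simp [pd]
  have hd : Differentiable ℝ (fun y => w (x - y)) := hw.differentiable.comp (by fun_prop)
  have hibp := integral_mul_fderiv_eq_neg_fderiv_mul_of_integrable (μ := volume) (f := K)
    (g := fun y => w (x - y)) (v := EuclideanSpace.single i 1)
    (hw.integrable_mul_comp_sub hK' x)
    (by simpa only [hpd, mul_neg] using ((hw.pd i).integrable_mul_comp_sub hK x).fun_neg)
    (hw.integrable_mul_comp_sub hK x) (fun y _ => hKd y) (fun y _ => hd y)
  simp only [hpd, mul_neg, integral_neg, neg_inj] at hibp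
  exact hibp.symm

end Convolution

section ConvolutionDeriv

variable {n k : ℕ} {K K' w w' : ℝ → En n → ℝ} {φ : ℝ → ℝ} {M z₀ : ℝ}

/-- For `z` near `z₀` the kernels `K z` are continuous and dominated by one integrable function,
the hypothesis under which `K z ⋆ w` can be differentiated in `z`. -/
def LocallyDominated (K : ℝ → En n → ℝ) (z₀ : ℝ) : Prop :=
  ∃ G : En n → ℝ, Integrable G ∧ ∀ᶠ z in 𝓝 z₀, Continuous (K z) ∧ ∀ y, ‖K z y‖ ≤ G y

/-- `BddPartials k M (w z)` for `z` near `z₀`, with a constant `M` independent of `z`. -/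
def LocallyBddPartials (k : ℕ) (w : ℝ → En n → ℝ) (z₀ : ℝ) : Prop :=
  ∃ M, ∀ᶠ z in 𝓝 z₀, BddPartials k M (w z)

theorem eventually_norm_le_of_continuousAt (hφ : ContinuousAt φ z₀) :
    ∀ᶠ z in 𝓝 z₀, ‖φ z‖ ≤ ‖φ z₀‖ + 1 :=
  hφ.norm.eventually_le_const (lt_add_one _)

namespace LocallyDominated

theorem integrable (hK : LocallyDominated K z₀) : Integrable (K z₀) := by
  obtain ⟨G, hG, hKG⟩ := hK
  exact hG.mono' hKG.self_of_nhds.1.aestronglyMeasurable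
    (Eventually.of_forall hKG.self_of_nhds.2)

theorem sub (hK : LocallyDominated K z₀) (hK' : LocallyDominated K' z₀) :
    LocallyDominated (fun z y => K z y - K' z y) z₀ := by
  obtain ⟨G, hG, hKG⟩ := hK
  obtain ⟨G', hG', hKG'⟩ := hK'
  refine ⟨fun y => G y + G' y, hG.add hG', ?_⟩
  filter_upwards [hKG, hKG'] with z h h'
  exact ⟨h.1.sub h'.1, fun y => norm_sub_le_of_le (h.2 y) (h'.2 y)⟩

theorem fun_mul (hK : LocallyDominated K z₀) (hφ : ContinuousAt φ z₀) :
    LocallyDominated (fun z y => φ z * K z y) z₀ := by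
  obtain ⟨G, hG, hKG⟩ := hK
  refine ⟨fun y => (‖φ z₀‖ + 1) * G y, hG.const_mul _, ?_⟩
  filter_upwards [hKG, eventually_norm_le_of_continuousAt hφ] with z h hφz
  exact ⟨h.1.const_mul _, fun y => norm_mul_le_of_le hφz (h.2 y)⟩

end LocallyDominated

theorem BddPartials.locally {w : En n → ℝ} (hw : BddPartials k M w) (z₀ : ℝ) :
    LocallyBddPartials k (fun _ => w) z₀ :=
  ⟨M, Eventually.of_forall fun _ => hw⟩

namespace LocallyBddPartials

theorem add (hw : LocallyBddPartials k w z₀) (hw' : LocallyBddPartials k w' z₀) :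
    LocallyBddPartials k (fun z x => w z x + w' z x) z₀ := by
  obtain ⟨M, hM⟩ := hw
  obtain ⟨M', hM'⟩ := hw'
  exact ⟨M + M', by filter_upwards [hM, hM'] with z h h' using h.add h'⟩

theorem mul (hw : LocallyBddPartials k w z₀) (hw' : LocallyBddPartials k w' z₀) :
    LocallyBddPartials k (fun z x => w z x * w' z x) z₀ := by
  obtain ⟨M, hM⟩ := hw
  obtain ⟨M', hM'⟩ := hw'
  exact ⟨2 ^ k * (M * M'), by filter_upwards [hM, hM'] with z h h' using h.mul h'⟩

theorem convolution (hw : LocallyBddPartials k w z₀) (hK : LocallyDominated K z₀) :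
    LocallyBddPartials k (fun z => K z ⋆ w z) z₀ := by
  obtain ⟨M, hM⟩ := hw
  obtain ⟨G, hG, hKG⟩ := hK
  refine ⟨(∫ y, G y) * M, ?_⟩
  filter_upwards [hM, hKG] with z hMz hz
  have hKz : Integrable (K z) :=
    hG.mono' hz.1.aestronglyMeasurable (Eventually.of_forall hz.2)
  refine (hMz.convolution hKz).mono (mul_le_mul_of_nonneg_right ?_ hMz.nonneg)
  exact integral_mono hKz.norm hG hz.2

end LocallyBddPartials

theorem hasDerivAt_convolution (hK : LocallyDominated K z₀) (hK' : LocallyDominated K' z₀)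
    (hw : LocallyBddPartials 0 w z₀) (hw' : LocallyBddPartials 0 w' z₀)
    (hKd : ∀ᶠ z in 𝓝 z₀, ∀ y, HasDerivAt (fun z => K z y) (K' z y) z)
    (hwd : ∀ᶠ z in 𝓝 z₀, ∀ y, HasDerivAt (fun z => w z y) (w' z y) z) (x : En n) :
    HasDerivAt (fun z => (K z ⋆ w z) x) ((K' z₀ ⋆ w z₀) x + (K z₀ ⋆ w' z₀) x) z₀ := by
  have hKint := hK.integrable
  have hKint' := hK'.integrable
  obtain ⟨G, hG, hKG⟩ := hK
  obtain ⟨G', hG', hKG'⟩ := hK'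
  obtain ⟨M, hM⟩ := hw
  obtain ⟨M', hM'⟩ := hw'
  have hint := hM.self_of_nhds.integrable_mul_comp_sub hKint' x
  have hint' := hM'.self_of_nhds.integrable_mul_comp_sub hKint x
  simp only [convolution_eq_integral_mul]
  rw [← integral_add hint hint']
  refine (hasDerivAt_integral_of_dominated_loc_of_deriv_le (μ := volume)
    (F := fun z y => K z y * w z (x - y))
    (F' := fun z y => K' z y * w z (x - y) + K z y * w' z (x - y))
    (bound := fun y => G' y * M + G y * M')
    ((hKG.and hKG').and ((hM.and hM').and (hKd.and hwd))) ?_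
    (hM.self_of_nhds.integrable_mul_comp_sub hKint x)
    (hint.add hint').aestronglyMeasurable
    (Eventually.of_forall fun y z hz => ?_) ((hG'.mul_const M).add (hG.mul_const M'))
    (Eventually.of_forall fun y z hz => (hz.2.2.1 y).mul (hz.2.2.2 (x - y)))).2
  · filter_upwards [hKG, hM] with z hKz hMz
    have := hMz.continuous
    exact (hKz.1.mul (by fun_prop)).aestronglyMeasurable
  · obtain ⟨⟨hKz, hKz'⟩, ⟨hMz, hMz'⟩, -⟩ := hz
    exact norm_add_le_of_le (norm_mul_le_of_le (hKz'.2 y) (hMz.norm_le _))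
      (norm_mul_le_of_le (hKz.2 y) (hMz'.norm_le _))

end ConvolutionDeriv

/-! ### Mass of the Poisson kernel -/

section GaussianSubordination

variable {n : ℕ} {s c t : ℝ}

/-- The integrand of Gaussian subordination: integrated in `t > 0` it is
`Γ(n/2+s) (|y|² + c)^{-(n/2+s)}`, while in `y` it is Gaussian. -/
def subordinationIntegrand (n : ℕ) (s c t : ℝ) (y : En n) : ℝ :=
  t ^ ((n : ℝ) / 2 + s - 1) * Real.exp (-((‖y‖ ^ 2 + c) * t))

theorem subordinationIntegrand_eq (n : ℕ) (s c t : ℝ) (y : En n) :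
    subordinationIntegrand n s c t y =
      (t ^ ((n : ℝ) / 2 + s - 1) * Real.exp (-(c * t))) * Real.exp (-t * ‖y‖ ^ 2) := by
  rw [subordinationIntegrand, mul_assoc, ← Real.exp_add]
  ring_nf

theorem integrable_subordinationIntegrand (ht : 0 < t) :
    Integrable (subordinationIntegrand n s c t) := by
  have hgauss : Integrable fun y : En n => Real.exp (-t * ‖y‖ ^ 2) := by
    refine Integrable.of_integral_ne_zero ?_
    rw [GaussianFourier.integral_rexp_neg_mul_sq_norm ht]
    positivity
  exact (hgauss.const_mul _).congr
    (Eventually.of_forall fun y => (subordinationIntegrand_eq n s c t y).symm)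

theorem integral_subordinationIntegrand (ht : 0 < t) :
    ∫ y, subordinationIntegrand n s c t y =
      Real.pi ^ ((n : ℝ) / 2) * (t ^ (s - 1) * Real.exp (-(c * t))) := by
  have hpow : t ^ ((n : ℝ) / 2 + s - 1) = t ^ (s - 1) * t ^ ((n : ℝ) / 2) := by
    rw [← Real.rpow_add ht]
    ring_nf
  have hne : t ^ ((n : ℝ) / 2) ≠ 0 := (Real.rpow_pos_of_pos ht _).ne'
  simp only [subordinationIntegrand_eq]
  rw [integral_const_mul, GaussianFourier.integral_rexp_neg_mul_sq_norm ht,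
    Real.div_rpow Real.pi_pos.le ht.le, finrank_euclideanSpace_fin, hpow]
  field_simp

theorem setIntegral_subordinationIntegrand (hs : 0 < s) (hc : 0 < c) (y : En n) :
    ∫ t in Ioi (0 : ℝ), subordinationIntegrand n s c t y =
      (‖y‖ ^ 2 + c) ^ (-((n : ℝ) / 2 + s)) * Real.Gamma ((n : ℝ) / 2 + s) := by
  have hpos : 0 < ‖y‖ ^ 2 + c := by positivity
  simp only [subordinationIntegrand]
  rw [Real.integral_rpow_mul_exp_neg_mul_Ioi (by positivity) hpos, one_div,
    Real.inv_rpow hpos.le, Real.rpow_neg hpos.le]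

theorem integrable_prod_subordinationIntegrand (hs : 0 < s) (hc : 0 < c) :
    Integrable (Function.uncurry (subordinationIntegrand n s c))
      ((volume.restrict (Ioi (0 : ℝ))).prod volume) := by
  have hmeas : Measurable (Function.uncurry (subordinationIntegrand n s c)) := by
    unfold subordinationIntegrand Function.uncurry
    fun_prop
  have hexp : IntegrableOn (fun t : ℝ => t ^ (s - 1) * Real.exp (-(c * t))) (Ioi 0) := by
    refine Integrable.of_integral_ne_zero ?_
    rw [Real.integral_rpow_mul_exp_neg_mul_Ioi hs hc]
    have := Real.Gamma_pos_of_pos hs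
    positivity
  rw [integrable_prod_iff hmeas.aestronglyMeasurable]
  constructor
  · filter_upwards [ae_restrict_mem measurableSet_Ioi] with t ht
    exact integrable_subordinationIntegrand ht
  · refine (hexp.const_mul (Real.pi ^ ((n : ℝ) / 2))).congr ?_
    filter_upwards [ae_restrict_mem measurableSet_Ioi] with t ht
    rw [← integral_subordinationIntegrand ht]
    refine integral_congr_ae (Eventually.of_forall fun y => (Real.norm_of_nonneg ?_).symm)
    exact mul_nonneg (Real.rpow_nonneg (le_of_lt ht) _) (Real.exp_nonneg _)

theorem integrable_norm_sq_add_rpow (n : ℕ) (hs : 0 < s) (hc : 0 < c) :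
    Integrable fun y : En n => (‖y‖ ^ 2 + c) ^ (-((n : ℝ) / 2 + s)) := by
  have hΓ : Real.Gamma ((n : ℝ) / 2 + s) ≠ 0 := (Real.Gamma_pos_of_pos (by positivity)).ne'
  have hint := (integrable_prod_subordinationIntegrand (n := n) hs hc).integral_prod_right
  simp only [Function.uncurry_apply_pair, setIntegral_subordinationIntegrand hs hc] at hint
  simpa only [mul_inv_cancel_right₀ hΓ] using
    hint.mul_const (Real.Gamma ((n : ℝ) / 2 + s))⁻¹

theorem integral_norm_sq_add_rpow (n : ℕ) (hs : 0 < s) (hc : 0 < c) :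
    ∫ y : En n, (‖y‖ ^ 2 + c) ^ (-((n : ℝ) / 2 + s)) =
      Real.pi ^ ((n : ℝ) / 2) * Real.Gamma s / Real.Gamma ((n : ℝ) / 2 + s) * c ^ (-s) := by
  have hΓ : Real.Gamma ((n : ℝ) / 2 + s) ≠ 0 := (Real.Gamma_pos_of_pos (by positivity)).ne'
  have hswap := integral_integral_swap (integrable_prod_subordinationIntegrand (n := n) hs hc)
  simp only [setIntegral_subordinationIntegrand hs hc] at hswap
  rw [integral_mul_const, setIntegral_congr_fun measurableSet_Ioi
    fun t ht => integral_subordinationIntegrand ht, integral_const_mul,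
    Real.integral_rpow_mul_exp_neg_mul_Ioi hs hc, one_div, Real.inv_rpow hc.le,
    ← Real.rpow_neg hc.le] at hswap
  rw [eq_div_iff hΓ |>.2 hswap.symm]
  ring

end GaussianSubordination

section PoissonKernel

variable {n : ℕ} {s z : ℝ}

theorem pns_pos (n : ℕ) (hs : 0 < s) : 0 < pns n s := by
  have := Real.Gamma_pos_of_pos (show 0 < (n : ℝ) / 2 + s by positivity)
  have := Real.Gamma_pos_of_pos hs
  unfold pns
  positivity

theorem pns_add_one (n : ℕ) (hs : 0 < s) :
    2 * s * pns n (s + 1) = (n + 2 * s) * pns n s := by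
  have := (Real.Gamma_pos_of_pos hs).ne'
  rw [pns, pns, ← add_assoc, Real.Gamma_add_one hs.ne', Real.Gamma_add_one (by positivity)]
  field_simp

theorem Pker_pos (hs : 0 < s) (hz : 0 < z) (y : En n) : 0 < Pker n s z y := by
  have := pns_pos n hs
  unfold Pker
  positivity

theorem Pker_neg (s z : ℝ) (y : En n) : Pker n s z (-y) = Pker n s z y := by
  simp only [Pker, norm_neg]

theorem Pker_add_one (hs : 0 < s) (hz : 0 < z) (y : En n) :
    2 * s * (‖y‖ ^ 2 + z ^ 2) * Pker n (s + 1) z y = (n + 2 * s) * z ^ 2 * Pker n s z y := by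
  have hR : 0 < ‖y‖ ^ 2 + z ^ 2 := by positivity
  have hzpow : z ^ (2 * (s + 1)) = z ^ (2 * s) * z ^ 2 := by
    rw [mul_add, Real.rpow_add hz, mul_one, Real.rpow_two]
  have hRpow : (‖y‖ ^ 2 + z ^ 2) ^ (-((n : ℝ) + 2 * (s + 1)) / 2) =
      (‖y‖ ^ 2 + z ^ 2) ^ (-((n : ℝ) + 2 * s) / 2) / (‖y‖ ^ 2 + z ^ 2) := by
    rw [← Real.rpow_sub_one hR.ne']
    ring_nf
  rw [Pker, Pker, hzpow, hRpow]
  field_simp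
  linear_combination pns_add_one n hs

theorem integrable_Pker (n : ℕ) (hs : 0 < s) (hz : 0 < z) : Integrable (Pker n s z) := by
  unfold Pker
  convert (integrable_norm_sq_add_rpow n hs (pow_pos hz 2)).const_mul (pns n s * z ^ (2 * s))
    using 4
  ring

theorem integral_Pker (n : ℕ) (hs : 0 < s) (hz : 0 < z) : ∫ y, Pker n s z y = 1 := by
  have hzpow : (z ^ 2) ^ (-s) = (z ^ (2 * s))⁻¹ := by
    rw [Real.rpow_neg (by positivity), ← Real.rpow_natCast, ← Real.rpow_mul hz.le, Nat.cast_two]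
  have hexp : -((n : ℝ) + 2 * s) / 2 = -((n : ℝ) / 2 + s) := by ring
  simp only [Pker, hexp]
  rw [integral_const_mul, integral_norm_sq_add_rpow n hs (pow_pos hz 2), pns, hzpow]
  field_simp

theorem integral_norm_Pker (n : ℕ) (hs : 0 < s) (hz : 0 < z) : ∫ y, ‖Pker n s z y‖ = 1 := by
  simp only [Real.norm_of_nonneg (Pker_pos hs hz _).le, integral_Pker n hs hz]

theorem measurable_uncurry_Pker (n : ℕ) (s : ℝ) : Measurable (Function.uncurry (Pker n s)) := by
  unfold Pker Function.uncurry
  fun_prop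

end PoissonKernel

/-! ### Derivatives of the Poisson kernel -/

section PoissonKernelDeriv

variable {n : ℕ} {s z a b : ℝ}

/-- The derivative `∂_z P_z`, written as a difference of Poisson kernels of orders `s` and `s + 1`
(see `hasDerivAt_Pker`). -/
def dzPker (n : ℕ) (s z : ℝ) (y : En n) : ℝ := 2 * s / z * (Pker n s z y - Pker n (s + 1) z y)

/-- The kernel `z^{1-2s} ∂_z P_z` of the weighted normal derivative of the extension. -/
def conormalKer (n : ℕ) (s z : ℝ) (y : En n) : ℝ := z ^ (1 - 2 * s) * dzPker n s z y

/-- The derivative `∂_z (z^{1-2s} ∂_z P_z)` (see `hasDerivAt_conormalKer`). -/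
def dzConormalKer (n : ℕ) (s z : ℝ) (y : En n) : ℝ :=
  -(2 * s) * z ^ (-(2 * s)) * dzPker n (s + 1) z y

theorem hasDerivAt_Pker (hs : 0 < s) (hz : 0 < z) (y : En n) :
    HasDerivAt (fun z => Pker n s z y) (dzPker n s z y) z := by
  have hR : 0 < ‖y‖ ^ 2 + z ^ 2 := by positivity
  have hzpow := Real.hasDerivAt_rpow_const (x := z) (p := 2 * s) (Or.inl hz.ne')
  have hRpow := ((hasDerivAt_pow 2 z).const_add (‖y‖ ^ 2)).rpow_const
    (p := -((n : ℝ) + 2 * s) / 2) (Or.inl hR.ne')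
  refine ((hzpow.const_mul (pns n s)).mul hRpow).congr_deriv ?_
  have hsucc : Pker n (s + 1) z y =
      (n + 2 * s) * z ^ 2 * Pker n s z y / (2 * s * (‖y‖ ^ 2 + z ^ 2)) := by
    rw [← Pker_add_one hs hz]
    field_simp
  rw [dzPker, hsucc, Pker, Real.rpow_sub_one hz.ne', Real.rpow_sub_one hR.ne']
  field_simp
  ring

theorem hasFDerivAt_Pker (hz : 0 < z) (y : En n) :
    HasFDerivAt (Pker n s z) ((-((n : ℝ) + 2 * s) / (‖y‖ ^ 2 + z ^ 2) * Pker n s z y) • innerSL ℝ y)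
      y := by
  have hR : 0 < ‖y‖ ^ 2 + z ^ 2 := by positivity
  refine ((((hasStrictFDerivAt_norm_sq y).hasFDerivAt.add_const (z ^ 2)).rpow_const
    (p := -((n : ℝ) + 2 * s) / 2) (Or.inl hR.ne')).const_mul
    (pns n s * z ^ (2 * s))).congr_fderiv ?_
  ext v
  simp only [Pker, Real.rpow_sub_one hR.ne', smul_apply, smul_eq_mul, nsmul_eq_mul]
  push_cast
  field_simp

theorem differentiable_Pker (s : ℝ) (hz : 0 < z) : Differentiable ℝ (Pker n s z) :=
  fun y => (hasFDerivAt_Pker hz y).differentiableAt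

theorem pd_Pker (hs : 0 < s) (hz : 0 < z) (i : Fin n) :
    pd i (Pker n s z) = fun y => -(2 * s / z ^ 2) * (y i * Pker n (s + 1) z y) := by
  funext y
  rw [pd, (hasFDerivAt_Pker hz y).fderiv]
  simp only [smul_apply, innerSL_apply_apply, EuclideanSpace.inner_single_right, smul_eq_mul]
  simp only [conj_trivial, one_mul]
  field_simp
  linear_combination y i * Pker_add_one hs hz y

theorem pd_coord (i : Fin n) : pd i (fun y : En n => y i) = fun _ => 1 := by
  funext y
  have hproj : fderiv ℝ (fun y : En n => y i) y = EuclideanSpace.proj i :=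
    (EuclideanSpace.proj i : En n →L[ℝ] ℝ).fderiv
  simp [pd, hproj]

theorem differentiable_coord (i : Fin n) : Differentiable ℝ fun y : En n => y i :=
  (EuclideanSpace.proj i : En n →L[ℝ] ℝ).differentiable

theorem differentiable_coord_mul_Pker (s : ℝ) (hz : 0 < z) (i : Fin n) :
    Differentiable ℝ (fun y : En n => y i * Pker n s z y) :=
  (differentiable_coord i).mul (differentiable_Pker s hz)

theorem differentiable_pd_Pker (hs : 0 < s) (hz : 0 < z) (i : Fin n) :
    Differentiable ℝ (pd i (Pker n s z)) := by
  rw [pd_Pker hs hz]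
  exact (differentiable_coord_mul_Pker _ hz i).const_mul _

theorem pd_pd_Pker (hs : 0 < s) (hz : 0 < z) (i : Fin n) :
    pd i (pd i (Pker n s z)) = fun y => 2 * s / z ^ 2 *
      (2 * (s + 1) / z ^ 2 * (y i ^ 2 * Pker n (s + 1 + 1) z y) - Pker n (s + 1) z y) := by
  rw [pd_Pker hs hz, pd_const_mul (differentiable_coord_mul_Pker _ hz i),
    pd_mul (differentiable_coord i) (differentiable_Pker _ hz),
    pd_Pker (by positivity) hz]
  funext y
  simp only [pd_coord]
  ring

theorem lapX_Pker (hs : 0 < s) (hz : 0 < z) (y : En n) :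
    lapX (Pker n s z) y = 2 * s / z * dzPker n (s + 1) z y := by
  have hsucc := Pker_add_one (s := s + 1) (by positivity) hz y
  have hnorm : ‖y‖ ^ 2 = ∑ i, y i ^ 2 := by simp [EuclideanSpace.norm_sq_eq]
  simp only [lapX, pd_pd_Pker hs hz, ← Finset.mul_sum, Finset.sum_sub_distrib, ← Finset.sum_mul,
    ← hnorm, Finset.sum_const, Finset.card_univ, Fintype.card_fin, nsmul_eq_mul, dzPker]
  field_simp
  linear_combination hsucc

theorem conormalKer_eq (n : ℕ) (s : ℝ) (hz : 0 < z) (y : En n) :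
    conormalKer n s z y = 2 * s * z ^ (-(2 * s)) * (Pker n s z y - Pker n (s + 1) z y) := by
  rw [conormalKer, dzPker, sub_eq_neg_add, Real.rpow_add_one hz.ne']
  field_simp

theorem hasDerivAt_conormalKer (hs : 0 < s) (hz : 0 < z) (y : En n) :
    HasDerivAt (fun z => conormalKer n s z y) (dzConormalKer n s z y) z := by
  have hpow := Real.hasDerivAt_rpow_const (x := z) (p := -(2 * s)) (Or.inl hz.ne')
  have hdiff := (hasDerivAt_Pker hs hz y).sub
    (hasDerivAt_Pker (s := s + 1) (by positivity) hz y)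
  refine (((hpow.const_mul (2 * s)).mul hdiff).congr_of_eventuallyEq ?_).congr_deriv ?_
  · filter_upwards [lt_mem_nhds hz] with t ht
    exact conormalKer_eq n s ht y
  · simp only [dzConormalKer, dzPker, Real.rpow_sub_one hz.ne', Pi.sub_apply]
    field_simp
    ring

theorem dzConormalKer_eq_lapX (hs : 0 < s) (hz : 0 < z) (y : En n) :
    dzConormalKer n s z y = -z ^ (1 - 2 * s) * lapX (Pker n s z) y := by
  rw [lapX_Pker hs hz, dzConormalKer, sub_eq_neg_add 1 (2 * s), Real.rpow_add_one hz.ne']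
  field_simp

theorem conormalKer_neg (s z : ℝ) (y : En n) : conormalKer n s z (-y) = conormalKer n s z y := by
  simp only [conormalKer, dzPker, Pker_neg]

theorem continuous_Pker (s : ℝ) (hz : 0 < z) : Continuous (Pker n s z) :=
  (differentiable_Pker s hz).continuous

theorem continuous_dzPker (s : ℝ) (hz : 0 < z) : Continuous (dzPker n s z) :=
  ((continuous_Pker s hz).sub (continuous_Pker (s + 1) hz)).const_mul _

theorem measurable_uncurry_dzPker (n : ℕ) (s : ℝ) :
    Measurable (Function.uncurry (dzPker n s)) :=
  (measurable_const.div measurable_fst).mul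
    ((measurable_uncurry_Pker n s).sub (measurable_uncurry_Pker n (s + 1)))

theorem integrable_dzPker (n : ℕ) (hs : 0 < s) (hz : 0 < z) : Integrable (dzPker n s z) :=
  ((integrable_Pker n hs hz).sub (integrable_Pker n (by positivity) hz)).const_mul _

theorem integrable_conormalKer (n : ℕ) (hs : 0 < s) (hz : 0 < z) :
    Integrable (conormalKer n s z) :=
  (integrable_dzPker n hs hz).const_mul _

theorem integral_conormalKer (n : ℕ) (hs : 0 < s) (hz : 0 < z) :
    ∫ y, conormalKer n s z y = 0 := by
  have hs' : 0 < s + 1 := by positivity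
  simp only [conormalKer, dzPker, integral_const_mul]
  rw [integral_sub (integrable_Pker n hs hz) (integrable_Pker n hs' hz), integral_Pker n hs hz,
    integral_Pker n hs' hz, sub_self, mul_zero, mul_zero]

theorem Pker_add_one_le (hs : 0 < s) (hz : 0 < z) (y : En n) :
    2 * s * Pker n (s + 1) z y ≤ (n + 2 * s) * Pker n s z y := by
  have hR : 0 < ‖y‖ ^ 2 + z ^ 2 := by positivity
  refine le_of_mul_le_mul_left ?_ hR
  calc (‖y‖ ^ 2 + z ^ 2) * (2 * s * Pker n (s + 1) z y)
      = z ^ 2 * ((n + 2 * s) * Pker n s z y) := by linear_combination Pker_add_one hs hz y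
    _ ≤ (‖y‖ ^ 2 + z ^ 2) * ((n + 2 * s) * Pker n s z y) := by
      have := Pker_pos hs hz y
      gcongr
      exact le_add_of_nonneg_left (by positivity)

theorem norm_dzPker_le (hs : 0 < s) (hz : 0 < z) (y : En n) :
    ‖dzPker n s z y‖ ≤ (n + 2 * s) / z * Pker n s z y := by
  have hP := Pker_pos hs hz y
  have hP' := Pker_pos (s := s + 1) (by positivity) hz y
  have hle := Pker_add_one_le hs hz y
  have hdz : dzPker n s z y = (2 * s * Pker n s z y - 2 * s * Pker n (s + 1) z y) / z := by
    rw [dzPker]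
    ring
  rw [hdz, norm_div, Real.norm_of_nonneg hz.le, div_mul_eq_mul_div, Real.norm_eq_abs]
  gcongr
  rw [abs_le]
  constructor <;> nlinarith [mul_pos hs hP, mul_pos hs hP', mul_nonneg (Nat.cast_nonneg n) hP.le]

theorem norm_pd_Pker_le (hs : 0 < s) (hz : 0 < z) (i : Fin n) (y : En n) :
    ‖pd i (Pker n s z) y‖ ≤ (n + 2 * s) / z * Pker n s z y := by
  have hR : 0 < ‖y‖ ^ 2 + z ^ 2 := by positivity
  have hP := Pker_pos hs hz y
  have hyi : |y i| ≤ ‖y‖ := PiLp.norm_apply_le y i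
  have hpd : pd i (Pker n s z) y = -((n + 2 * s) * (y i / (‖y‖ ^ 2 + z ^ 2)) * Pker n s z y) := by
    rw [pd_Pker hs hz]
    field_simp
    linear_combination -y i * Pker_add_one hs hz y
  rw [hpd, norm_neg, norm_mul, norm_mul, Real.norm_of_nonneg hP.le,
    Real.norm_of_nonneg (by positivity), norm_div, Real.norm_of_nonneg hR.le, div_eq_mul_inv _ z]
  gcongr
  rw [Real.norm_eq_abs, div_le_iff₀ hR, ← div_eq_inv_mul, le_div_iff₀ hz]
  nlinarith [sq_nonneg (‖y‖ - z), norm_nonneg y]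

theorem integrable_pd_Pker (hs : 0 < s) (hz : 0 < z) (i : Fin n) :
    Integrable (pd i (Pker n s z)) :=
  ((integrable_Pker n hs hz).const_mul ((n + 2 * s) / z)).mono'
    (differentiable_pd_Pker hs hz i).continuous.aestronglyMeasurable
    (Eventually.of_forall (norm_pd_Pker_le hs hz i))

theorem integrable_coord_sq_mul_Pker_add_one (hs : 0 < s) (hz : 0 < z) (i : Fin n) :
    Integrable fun y : En n => y i ^ 2 * Pker n (s + 1) z y := by
  have hcont : Continuous fun y : En n => y i ^ 2 * Pker n (s + 1) z y :=
    ((differentiable_coord i).continuous.pow 2).mul (continuous_Pker _ hz)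
  refine ((integrable_Pker n hs hz).const_mul ((n + 2 * s) * z ^ 2 / (2 * s))).mono'
    hcont.aestronglyMeasurable (Eventually.of_forall fun y => ?_)
  have hP := Pker_pos (s := s + 1) (by positivity) hz y
  have hyi : y i ^ 2 ≤ ‖y‖ ^ 2 + z ^ 2 := by
    have := sq_le_sq' (neg_le_of_abs_le (PiLp.norm_apply_le y i))
      (le_of_abs_le (PiLp.norm_apply_le y i))
    nlinarith
  rw [Real.norm_of_nonneg (by positivity), div_mul_eq_mul_div, ← Pker_add_one hs hz,
    le_div_iff₀ (by positivity)]
  nlinarith [mul_le_mul_of_nonneg_right hyi (mul_pos hs hP).le]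

theorem integrable_pd_pd_Pker (hs : 0 < s) (hz : 0 < z) (i : Fin n) :
    Integrable (pd i (pd i (Pker n s z))) := by
  have hs' : 0 < s + 1 := by positivity
  rw [pd_pd_Pker hs hz]
  exact (((integrable_coord_sq_mul_Pker_add_one hs' hz i).const_mul _).sub
    (integrable_Pker n hs' hz)).const_mul _

theorem integral_norm_le_of_norm_le_Pker {K : En n → ℝ} {c : ℝ} (hs : 0 < s) (hz : 0 < z)
    (hK : ∀ y, ‖K y‖ ≤ c * Pker n s z y) : ∫ y, ‖K y‖ ≤ c := by
  calc ∫ y, ‖K y‖ ≤ ∫ y, c * Pker n s z y :=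
        integral_mono_of_nonneg (Eventually.of_forall fun y => norm_nonneg _)
          ((integrable_Pker n hs hz).const_mul c) (Eventually.of_forall hK)
    _ = c := by rw [integral_const_mul, integral_Pker n hs hz, mul_one]

theorem rpow_neg_half_le (n : ℕ) (hs : 0 < s) (ha : 0 < a) (hab : a ≤ b) :
    b ^ (-((n : ℝ) + 2 * s) / 2) ≤ a ^ (-((n : ℝ) + 2 * s) / 2) :=
  Real.rpow_le_rpow_of_nonpos ha hab
    (div_nonpos_of_nonpos_of_nonneg (neg_nonpos.2 (by positivity)) two_pos.le)

theorem Pker_le_of_mem_Icc (hs : 0 < s) (ha : 0 < a) (hz : z ∈ Icc a b) (y : En n) :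
    Pker n s z y ≤ (b / a) ^ (2 * s) * Pker n s a y := by
  have := pns_pos n hs
  have hb : 0 < b := ha.trans_le (hz.1.trans hz.2)
  have hz₀ : 0 < z := ha.trans_le hz.1
  calc Pker n s z y
      ≤ pns n s * b ^ (2 * s) * (‖y‖ ^ 2 + a ^ 2) ^ (-((n : ℝ) + 2 * s) / 2) := by
        have hsq : a ^ 2 ≤ z ^ 2 := pow_le_pow_left₀ ha.le hz.1 2
        have hpow : z ^ (2 * s) ≤ b ^ (2 * s) :=
          Real.rpow_le_rpow hz₀.le hz.2 (mul_pos two_pos hs).le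
        exact mul_le_mul (mul_le_mul_of_nonneg_left hpow this.le)
          (rpow_neg_half_le n hs (by positivity) (add_le_add_right hsq _)) (by positivity)
          (by positivity)
    _ = (b / a) ^ (2 * s) * Pker n s a y := by
        rw [Pker, Real.div_rpow hb.le ha.le]
        field_simp

theorem locallyDominated_Pker (n : ℕ) (hs : 0 < s) (hz : 0 < z) :
    LocallyDominated (Pker n s) z := by
  refine ⟨fun y => (2 * z / (z / 2)) ^ (2 * s) * Pker n s (z / 2) y,
    (integrable_Pker n hs (half_pos hz)).const_mul _, ?_⟩
  filter_upwards [Icc_mem_nhds (half_lt_self hz) (lt_two_mul_self hz)] with t ht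
  have ht' : 0 < t := (half_pos hz).trans_le ht.1
  refine ⟨continuous_Pker s ht', fun y => ?_⟩
  rw [Real.norm_of_nonneg (Pker_pos hs ht' y).le]
  exact Pker_le_of_mem_Icc hs (half_pos hz) ht y

theorem locallyDominated_dzPker (n : ℕ) (hs : 0 < s) (hz : 0 < z) :
    LocallyDominated (dzPker n s) z :=
  ((locallyDominated_Pker n hs hz).sub (locallyDominated_Pker n (by positivity) hz)).fun_mul
    (continuousAt_const.div continuousAt_id hz.ne')

theorem locallyDominated_conormalKer (n : ℕ) (hs : 0 < s) (hz : 0 < z) :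
    LocallyDominated (conormalKer n s) z :=
  (locallyDominated_dzPker n hs hz).fun_mul
    (Real.continuousAt_rpow_const z _ (Or.inl hz.ne'))

theorem locallyDominated_dzConormalKer (n : ℕ) (hs : 0 < s) (hz : 0 < z) :
    LocallyDominated (dzConormalKer n s) z :=
  (locallyDominated_dzPker n (by positivity) hz).fun_mul
    ((Real.continuousAt_rpow_const z _ (Or.inl hz.ne')).const_mul _)

end PoissonKernelDeriv

section PoissonKernelLevy

variable {n : ℕ} {s z : ℝ}

theorem rpow_neg_mul_Pker (n : ℕ) (s : ℝ) (hz : 0 < z) (y : En n) :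
    z ^ (-(2 * s)) * Pker n s z y =
      pns n s * (‖y‖ ^ 2 + z ^ 2) ^ (-((n : ℝ) + 2 * s) / 2) := by
  rw [Pker, Real.rpow_neg hz.le]
  field_simp

theorem levyKernel_eq (n : ℕ) (s : ℝ) (y : En n) :
    levyKernel n s y = (‖y‖ ^ 2) ^ (-((n : ℝ) + 2 * s) / 2) := by
  rw [levyKernel, ← Real.rpow_natCast, ← Real.rpow_mul (norm_nonneg _)]
  ring_nf

theorem rpow_neg_mul_Pker_le (hs : 0 < s) (hz : 0 < z) {y : En n} (hy : y ≠ 0) :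
    z ^ (-(2 * s)) * Pker n s z y ≤ pns n s * levyKernel n s y := by
  rw [rpow_neg_mul_Pker n s hz, levyKernel_eq]
  have := pns_pos n hs
  exact mul_le_mul_of_nonneg_left (rpow_neg_half_le n hs (by positivity)
    (le_add_of_nonneg_right (sq_nonneg z))) this.le

theorem isLevyDominated_Pker (hs : 0 < s) (hz : 0 < z) :
    IsLevyDominated s (pns n s * z ^ (2 * s)) (Pker n s z) where
  aestronglyMeasurable := (continuous_Pker s hz).aestronglyMeasurable
  norm_le y hy := by
    have hle := rpow_neg_mul_Pker_le hs hz hy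
    rw [Real.rpow_neg hz.le, inv_mul_le_iff₀ (by positivity)] at hle
    rw [Real.norm_of_nonneg (Pker_pos hs hz y).le]
    linarith

theorem norm_conormalKer_le (hs : 0 < s) (hz : 0 < z) (y : En n) :
    ‖conormalKer n s z y‖ ≤ (n + 2 * s) * z ^ (-(2 * s)) * Pker n s z y := by
  have hzpow : z ^ (1 - 2 * s) = z ^ (-(2 * s)) * z := by
    rw [sub_eq_neg_add, Real.rpow_add_one hz.ne']
  calc ‖conormalKer n s z y‖ = z ^ (1 - 2 * s) * ‖dzPker n s z y‖ := by
        rw [conormalKer, norm_mul, Real.norm_of_nonneg (by positivity)]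
    _ ≤ z ^ (1 - 2 * s) * ((n + 2 * s) / z * Pker n s z y) := by
        gcongr
        exact norm_dzPker_le hs hz y
    _ = (n + 2 * s) * z ^ (-(2 * s)) * Pker n s z y := by
        rw [hzpow]
        field_simp

theorem isLevyDominated_conormalKer (hs : 0 < s) (hz : 0 < z) :
    IsLevyDominated s ((n + 2 * s) * pns n s) (conormalKer n s z) where
  aestronglyMeasurable := (integrable_conormalKer n hs hz).aestronglyMeasurable
  norm_le y hy := by
    refine (norm_conormalKer_le hs hz y).trans ?_
    rw [mul_assoc, mul_assoc]
    exact mul_le_mul_of_nonneg_left (rpow_neg_mul_Pker_le hs hz hy) (by have := hs; positivity)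

theorem tendsto_rpow_neg_mul_Pker (n : ℕ) (s : ℝ) {y : En n} (hy : y ≠ 0) :
    Tendsto (fun z => z ^ (-(2 * s)) * Pker n s z y) (𝓝[>] 0) (𝓝 (pns n s * levyKernel n s y)) := by
  have hsq : Tendsto (fun z : ℝ => ‖y‖ ^ 2 + z ^ 2) (𝓝[>] 0) (𝓝 (‖y‖ ^ 2)) := by
    have : Continuous fun z : ℝ => ‖y‖ ^ 2 + z ^ 2 := by fun_prop
    simpa using (this.tendsto 0).mono_left nhdsWithin_le_nhds
  have hlim := (hsq.rpow_const (p := -((n : ℝ) + 2 * s) / 2)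
    (Or.inl (pow_pos (norm_pos_iff.2 hy) 2).ne')).const_mul (pns n s)
  rw [levyKernel_eq]
  refine hlim.congr' ?_
  filter_upwards [self_mem_nhdsWithin] with z hz
  exact (rpow_neg_mul_Pker n s hz y).symm

theorem tendsto_conormalKer (hs : 0 < s) {y : En n} (hy : y ≠ 0) :
    Tendsto (fun z => conormalKer n s z y) (𝓝[>] 0)
      (𝓝 (2 * s * pns n s * levyKernel n s y)) := by
  have hfrac : Tendsto (fun z : ℝ => 2 * s - (n + 2 * s) * (z ^ 2 / (‖y‖ ^ 2 + z ^ 2)))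
      (𝓝[>] 0) (𝓝 (2 * s)) := by
    have : ContinuousAt (fun z : ℝ => 2 * s - (n + 2 * s) * (z ^ 2 / (‖y‖ ^ 2 + z ^ 2))) 0 := by
      fun_prop (disch := positivity)
    simpa using this.tendsto.mono_left nhdsWithin_le_nhds
  rw [mul_assoc]
  refine (hfrac.mul (tendsto_rpow_neg_mul_Pker n s hy)).congr' ?_
  filter_upwards [self_mem_nhdsWithin] with z (hz : 0 < z)
  rw [conormalKer_eq n s hz]
  field_simp
  linear_combination Pker_add_one hs hz y

theorem betaS_pos (hs : s ∈ Ioo (0 : ℝ) 1) : 0 < betaS s := by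
  have := Real.Gamma_pos_of_pos hs.1
  have := Real.Gamma_pos_of_pos (sub_pos.2 hs.2)
  unfold betaS
  positivity

theorem betaS_mul_pns (n : ℕ) (hs : s ∈ Ioo (0 : ℝ) 1) :
    betaS s * (2 * s * pns n s) = Cns n s := by
  have hreflect : Real.Gamma (1 - s) = -s * Real.Gamma (-s) := by
    rw [← Real.Gamma_add_one (neg_ne_zero.2 hs.1.ne'), neg_add_eq_sub]
  have hneg : Real.Gamma (-s) < 0 := by
    nlinarith [Real.Gamma_pos_of_pos (sub_pos.2 hs.2), hs.1]
  have hΓs : Real.Gamma s ≠ 0 := (Real.Gamma_pos_of_pos hs.1).ne'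
  have hfour : (4 : ℝ) ^ s = 2 ^ (2 * s - 1) * 2 := by
    rw [← Real.rpow_add_one two_ne_zero, sub_add_cancel, Real.rpow_mul two_pos.le]
    norm_num
  have := hs.1.ne'
  have := hneg.ne
  rw [betaS, Cns, pns, abs_of_neg hneg, hreflect, hfour]
  field_simp

end PoissonKernelLevy

/-! ### The extension and its weighted normal derivative -/

section ExtensionBounds

variable {n k : ℕ} {s z c M : ℝ} {K f w : En n → ℝ}

theorem BddPartials.Pker_convolution (hs : 0 < s) (hz : 0 < z) (hw : BddPartials k M w) :
    BddPartials k M (Pker n s z ⋆ w) := by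
  simpa only [integral_norm_Pker n hs hz, one_mul] using hw.convolution (integrable_Pker n hs hz)

theorem BddPartials.convolution_of_norm_le_Pker (hs : 0 < s) (hz : 0 < z) (hK : Integrable K)
    (hKP : ∀ y, ‖K y‖ ≤ c * Pker n s z y) (hw : BddPartials k M w) :
    BddPartials k (c * M) (K ⋆ w) :=
  (hw.convolution hK).mono
    (mul_le_mul_of_nonneg_right (integral_norm_le_of_norm_le_Pker hs hz hKP) hw.nonneg)

theorem conormalKer_convolution_eq_meanDiffInt (hs : 0 < s) (hz : 0 < z)
    (hw : BddPartials k M w) : conormalKer n s z ⋆ w = meanDiffInt (conormalKer n s z) w := by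
  funext x
  rw [convolution_eq_meanDiffInt_add (integrable_conormalKer n hs hz) (conormalKer_neg s z) hw,
    integral_conormalKer n hs hz, zero_mul, add_zero]

/-- The operator norm of `w ↦ conormalKer n s z ⋆ w` from `C_b^{k+2}` to `C_b^k` is at most this
constant, for every `z > 0`. -/
def conormalConst (n : ℕ) (s : ℝ) : ℝ :=
  (n + 2 * s) * pns n s * ∫ h : En n, levyMajorant n s h

theorem conormalConst_nonneg (n : ℕ) (hs : 0 < s) : 0 ≤ conormalConst n s := by
  have := pns_pos n hs
  exact mul_nonneg (by positivity) (integral_nonneg (levyMajorant_nonneg n s))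

theorem BddPartials.conormalKer_convolution (hs : s ∈ Ioo (0 : ℝ) 1) (hz : 0 < z)
    (hw : BddPartials (k + 2) M w) :
    BddPartials k (conormalConst n s * M) (conormalKer n s z ⋆ w) := by
  rw [conormalKer_convolution_eq_meanDiffInt hs.1 hz hw, conormalConst, mul_right_comm]
  exact hw.meanDiffInt hs (isLevyDominated_conormalKer hs.1 hz)

theorem norm_conormalKer_convolution_le (hs : 0 < s) (hz : 0 < z) (hw : BddPartials k M w)
    (x : En n) : ‖(conormalKer n s z ⋆ w) x‖ ≤ (n + 2 * s) * z ^ (-(2 * s)) * M :=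
  (hw.convolution_of_norm_le_Pker hs hz (integrable_conormalKer n hs hz)
    (norm_conormalKer_le hs hz)).norm_le x

theorem tendsto_conormalKer_convolution (hs : s ∈ Ioo (0 : ℝ) 1) {F : ℝ → En n → ℝ}
    (hF : ∀ᶠ z in 𝓝[>] 0, BddPartials 2 M (F z)) (hf : BddPartials 2 c f)
    (hFf : ∀ x, Tendsto (fun z => F z x) (𝓝[>] 0) (𝓝 (f x))) (x : En n) :
    Tendsto (fun z => (conormalKer n s z ⋆ F z) x) (𝓝[>] 0)
      (𝓝 ((betaS s)⁻¹ * Lam n s f x)) := by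
  have hlim : meanDiffInt (fun h => 2 * s * pns n s * levyKernel n s h) f x =
      (betaS s)⁻¹ * Lam n s f x := by
    have hβ := (betaS_pos hs).ne'
    rw [Lam_eq_meanDiffInt hs hf, ← betaS_mul_pns n hs]
    simp only [meanDiffInt, mul_assoc, integral_const_mul, inv_mul_cancel_left₀ hβ]
  rw [← hlim]
  have hpos : ∀ᶠ z : ℝ in 𝓝[>] 0, 0 < z := self_mem_nhdsWithin
  refine (tendsto_meanDiffInt hs (hpos.mono fun z hz => isLevyDominated_conormalKer hs.1 hz) hF
    (fun h hh => tendsto_conormalKer hs.1 hh) hFf x).congr' ?_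
  filter_upwards [hF, hpos] with z hFz hz
  rw [conormalKer_convolution_eq_meanDiffInt hs.1 hz hFz]

theorem norm_Pker_convolution_sub_le (hs : s ∈ Ioo (0 : ℝ) 1) (hz : 0 < z)
    (hw : BddPartials 2 M w) (x : En n) :
    ‖(Pker n s z ⋆ w) x - w x‖ ≤
      pns n s * z ^ (2 * s) * M * ∫ h : En n, levyMajorant n s h := by
  rw [convolution_eq_meanDiffInt_add (integrable_Pker n hs.1 hz) (Pker_neg s z) hw,
    integral_Pker n hs.1 hz, one_mul, add_sub_cancel_right]
  exact (hw.meanDiffInt (k := 0) hs (isLevyDominated_Pker hs.1 hz)).norm_le x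

theorem tendsto_Pker_convolution_sub (hs : s ∈ Ioo (0 : ℝ) 1) {F : ℝ → En n → ℝ}
    (hF : ∀ᶠ z in 𝓝[>] 0, BddPartials 2 M (F z)) (x : En n) :
    Tendsto (fun z => (Pker n s z ⋆ F z) x - F z x) (𝓝[>] 0) (𝓝 0) := by
  have hbound : Tendsto (fun z : ℝ => pns n s * z ^ (2 * s) * M *
      ∫ h : En n, levyMajorant n s h) (𝓝[>] 0) (𝓝 0) := by
    have hpow : Tendsto (fun z : ℝ => z ^ (2 * s)) (𝓝[>] 0) (𝓝 0) := by
      have := (Real.continuousAt_rpow_const 0 (2 * s) (Or.inr (mul_pos two_pos hs.1).le)).tendsto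
      rw [Real.zero_rpow (mul_pos two_pos hs.1).ne'] at this
      exact this.mono_left nhdsWithin_le_nhds
    simpa using ((hpow.const_mul (pns n s)).mul_const M).mul_const
      (∫ h : En n, levyMajorant n s h)
  refine squeeze_zero_norm' ?_ hbound
  filter_upwards [hF, self_mem_nhdsWithin] with z hFz hz
  exact norm_Pker_convolution_sub_le hs hz hFz x

theorem tendsto_Pker_convolution (hs : s ∈ Ioo (0 : ℝ) 1) (hw : BddPartials 2 M w) (x : En n) :
    Tendsto (fun z => (Pker n s z ⋆ w) x) (𝓝[>] 0) (𝓝 (w x)) :=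
  tendsto_sub_nhds_zero_iff.1
    (tendsto_Pker_convolution_sub hs (Eventually.of_forall fun _ => hw) x)

end ExtensionBounds

section ExtensionEquation

variable {n k : ℕ} {s z M N : ℝ} {K w f g : En n → ℝ}

theorem lapX_mul (hf : BddPartials 2 M f) (hg : BddPartials 2 N g) (x : En n) :
    lapX (fun x => f x * g x) x =
      f x * lapX g x + lapX f x * g x + 2 * ∑ i, pd i f x * pd i g x := by
  have hpd (i : Fin n) : pd i (pd i fun x => f x * g x) x =
      f x * pd i (pd i g) x + pd i (pd i f) x * g x + 2 * (pd i f x * pd i g x) := by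
    have hfd := hf.differentiable
    have hgd := hg.differentiable
    have hfd' := (hf.pd i).differentiable
    have hgd' := (hg.pd i).differentiable
    rw [pd_mul hfd hgd, pd_add (hfd.fun_mul hgd') (hfd'.fun_mul hgd), pd_mul hfd hgd',
      pd_mul hfd' hgd]
    ring
  simp only [lapX, hpd, Finset.sum_add_distrib, ← Finset.mul_sum, ← Finset.sum_mul]

theorem BddPartials.lapX (hw : BddPartials (k + 2) M w) : BddPartials k (n * M) (lapX w) :=
  (BddPartials.sum Finset.univ fun i => (hw.pd i).pd i).mono (by simp)

theorem lapX_convolution (hw : BddPartials 2 M w) (hK : Integrable K) :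
    lapX (K ⋆ w) = K ⋆ lapX w := by
  funext x
  simp only [lapX, pd_convolution (hw.of_le one_le_two) hK, pd_convolution (hw.pd _) hK,
    convolution_eq_integral_mul, Finset.mul_sum]
  exact (integral_finsetSum _ fun i _ => ((hw.pd i).pd i).integrable_mul_comp_sub hK x).symm

theorem lapX_Pker_convolution (hs : 0 < s) (hz : 0 < z) (hw : BddPartials 2 M w) :
    lapX (Pker n s z) ⋆ w = lapX (Pker n s z ⋆ w) := by
  have hP := integrable_Pker n hs hz
  have hP' := integrable_pd_Pker (n := n) hs hz
  have hP'' := integrable_pd_pd_Pker (n := n) hs hz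
  have hmove (i : Fin n) : pd i (pd i (Pker n s z)) ⋆ w = Pker n s z ⋆ pd i (pd i w) := by
    rw [pd_convolution_eq_convolution_pd (differentiable_pd_Pker hs hz i) (hP' i) (hP'' i)
      (hw.of_le one_le_two), pd_convolution_eq_convolution_pd (differentiable_Pker s hz) hP
      (hP' i) (hw.pd i)]
  rw [lapX_convolution hw hP]
  funext x
  simp only [lapX, convolution_eq_integral_mul, Finset.mul_sum, Finset.sum_mul]
  rw [integral_finsetSum _ fun i _ => hw.integrable_mul_comp_sub (hP'' i) x,
    integral_finsetSum _ fun i _ => ((hw.pd i).pd i).integrable_mul_comp_sub hP x]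
  exact Finset.sum_congr rfl fun i _ => congrFun (hmove i) x

/-- The extension equation `∂_z (z^{1-2s} ∂_z W) = -z^{1-2s} Δ_x W`. -/
theorem dzConormalKer_convolution (hs : 0 < s) (hz : 0 < z) (hw : BddPartials 2 M w) :
    dzConormalKer n s z ⋆ w = fun x => -z ^ (1 - 2 * s) * lapX (Pker n s z ⋆ w) x := by
  rw [← lapX_Pker_convolution hs hz hw, ← const_mul_convolution,
    funext (dzConormalKer_eq_lapX hs hz)]

end ExtensionEquation

/-! ### The gradient of the extension -/

section ExtensionGradient

variable {n k : ℕ} {s z M N : ℝ} {u v w : En n → ℝ}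

/-- The components of the gradient `∇_{x,z}` of the extension `P_z ∗ w`: the index `none` stands for
`∂_z`, the index `some i` for `∂_{x_i}`. -/
def extGrad (n : ℕ) (s : ℝ) (w : En n → ℝ) (z : ℝ) : Option (Fin n) → En n → ℝ
  | none => dzPker n s z ⋆ w
  | some i => Pker n s z ⋆ pd i w

/-- The inner product `∇_{x,z} U · ∇_{x,z} V` of the gradients of two extensions. -/
def gradProd (n : ℕ) (s : ℝ) (u v : En n → ℝ) (z : ℝ) (x : En n) : ℝ :=
  ∑ a, extGrad n s u z a x * extGrad n s v z a x

/-- The size in `z` of the gradient of the extension of a smooth bounded function, up to a constant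
factor. -/
def gradDecay (s z : ℝ) : ℝ := if z ≤ 1 then 1 + z ^ (2 * s - 1) else z⁻¹

/-- The constant in the gradient bound `BddPartials.extGrad`. -/
def gradConst (n : ℕ) (s : ℝ) : ℝ := 1 + (n + 2 * s) + conormalConst n s

/-- The constant in the bound `BddPartials.gradProd`. -/
def gradProdConst (n k : ℕ) (s : ℝ) : ℝ := (n + 1) * 2 ^ k * gradConst n s ^ 2

theorem gradProd_eq (u v : En n → ℝ) (z : ℝ) (x : En n) :
    gradProd n s u v z x = (dzPker n s z ⋆ u) x * (dzPker n s z ⋆ v) x +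
      ∑ i, (Pker n s z ⋆ pd i u) x * (Pker n s z ⋆ pd i v) x :=
  Fintype.sum_option _

theorem conormalKer_convolution_eq (w : En n → ℝ) (s z : ℝ) :
    conormalKer n s z ⋆ w = fun x => z ^ (1 - 2 * s) * (dzPker n s z ⋆ w) x :=
  const_mul_convolution _ _ _

theorem dzPker_convolution_eq (hz : 0 < z) (w : En n → ℝ) :
    dzPker n s z ⋆ w = fun x => z ^ (2 * s - 1) * (conormalKer n s z ⋆ w) x := by
  funext x
  rw [conormalKer_convolution_eq, ← mul_assoc, ← Real.rpow_add hz]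
  norm_num

theorem BddPartials.extGrad_of_le_one (hs : s ∈ Ioo (0 : ℝ) 1) (hz : 0 < z)
    (hw : BddPartials (k + 2) M w) (a : Option (Fin n)) :
    BddPartials k (gradConst n s * (1 + z ^ (2 * s - 1)) * M) (extGrad n s w z a) := by
  have hs₀ := hs.1
  have hC := conormalConst_nonneg n hs₀
  have hM := hw.nonneg
  have hzpow : 0 ≤ z ^ (2 * s - 1) := by positivity
  rw [gradConst]
  cases a with
  | none =>
    rw [extGrad, dzPker_convolution_eq hz]
    refine ((hw.conormalKer_convolution hs hz).const_mul _).mono ?_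
    rw [Real.norm_of_nonneg hzpow, mul_left_comm, ← mul_assoc]
    gcongr <;> linarith
  | some i =>
    refine (((hw.pd i).of_succ).Pker_convolution hs.1 hz).mono (le_mul_of_one_le_left hM ?_)
    exact one_le_mul_of_one_le_of_one_le (by linarith) (by linarith)

theorem BddPartials.extGrad_inv (hs : 0 < s) (hz : 0 < z)
    (hw : BddPartials (k + 1) M w) (a : Option (Fin n)) :
    BddPartials k (gradConst n s * z⁻¹ * M) (extGrad n s w z a) := by
  have hC := conormalConst_nonneg n hs
  have hM := hw.nonneg
  refine BddPartials.mono (M := (n + 2 * s) / z * M) ?_ ?_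
  · cases a with
    | none =>
      exact hw.of_succ.convolution_of_norm_le_Pker hs hz (integrable_dzPker n hs hz)
        (norm_dzPker_le hs hz)
    | some i =>
      rw [extGrad, ← pd_convolution_eq_convolution_pd (differentiable_Pker s hz)
        (integrable_Pker n hs hz) (integrable_pd_Pker hs hz i) (hw.of_le (Nat.le_add_left 1 k))]
      exact hw.of_succ.convolution_of_norm_le_Pker hs hz (integrable_pd_Pker hs hz i)
        (norm_pd_Pker_le hs hz i)
  · rw [div_eq_mul_inv, gradConst]
    exact mul_le_mul_of_nonneg_right
      (mul_le_mul_of_nonneg_right (by linarith) (inv_nonneg.2 hz.le)) hM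

theorem BddPartials.extGrad (hs : s ∈ Ioo (0 : ℝ) 1) (hz : 0 < z)
    (hw : BddPartials (k + 2) M w) (a : Option (Fin n)) :
    BddPartials k (gradConst n s * gradDecay s z * M) (extGrad n s w z a) := by
  rw [gradDecay]
  split_ifs
  · exact hw.extGrad_of_le_one hs hz a
  · exact hw.of_succ.extGrad_inv hs.1 hz a

theorem integrableOn_rpow_mul_gradDecay_sq (hs : s ∈ Ioo (0 : ℝ) 1) :
    IntegrableOn (fun z => z ^ (1 - 2 * s) * gradDecay s z ^ 2) (Ioi 0) := by
  obtain ⟨hs₀, hs₁⟩ := hs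
  have hnear {p : ℝ} (hp : -1 < p) : IntegrableOn (fun z : ℝ => z ^ p) (Ioc 0 1) :=
    (intervalIntegrable_iff_integrableOn_Ioc_of_le zero_le_one).1
      (intervalIntegral.intervalIntegrable_rpow' hp)
  rw [← Ioc_union_Ioi_eq_Ioi zero_le_one]
  refine IntegrableOn.union ?_ ?_
  · refine (((hnear (p := 1 - 2 * s) (by linarith)).add (integrable_const (2 : ℝ))).add
      (hnear (p := 2 * s - 1) (by linarith))).congr_fun (fun z hz => ?_) measurableSet_Ioc
    have hinv : z ^ (1 - 2 * s) * z ^ (2 * s - 1) = 1 := by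
      rw [← Real.rpow_add hz.1]
      norm_num
    simp only [gradDecay, if_pos hz.2, Pi.add_apply]
    linear_combination (-2 - z ^ (2 * s - 1)) * hinv
  · refine (integrableOn_Ioi_rpow_of_lt (a := 1 - 2 * s - 2) (by linarith) one_pos).congr_fun
      (fun z (hz : 1 < z) => ?_) measurableSet_Ioi
    simp only [gradDecay, if_neg hz.not_ge]
    rw [Real.rpow_sub (one_pos.trans hz), Real.rpow_two, inv_pow, div_eq_mul_inv]

theorem BddPartials.gradProd (hs : s ∈ Ioo (0 : ℝ) 1) (hz : 0 < z)
    (hu : BddPartials (k + 2) M u) (hv : BddPartials (k + 2) N v) :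
    BddPartials k (gradProdConst n k s * (M * N) * gradDecay s z ^ 2)
      (gradProd n s u v z) := by
  refine (BddPartials.sum Finset.univ fun a =>
    (hu.extGrad hs hz a).mul (hv.extGrad hs hz a)).mono (le_of_eq ?_)
  simp only [gradProdConst, Finset.card_univ, Fintype.card_option, Fintype.card_fin]
  push_cast
  ring

theorem measurable_uncurry_extGrad (hw : BddPartials 1 M w) (a : Option (Fin n)) :
    Measurable (Function.uncurry fun z => extGrad n s w z a) := by
  cases a with
  | none =>
    exact measurable_uncurry_convolution (w := fun _ => w) (measurable_uncurry_dzPker n s)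
      (hw.continuous.measurable.comp measurable_snd)
  | some i =>
    exact measurable_uncurry_convolution (w := fun _ => pd i w) (measurable_uncurry_Pker n s)
      ((hw.pd i).continuous.measurable.comp measurable_snd)

theorem measurable_uncurry_gradProd (hu : BddPartials 1 M u) (hv : BddPartials 1 N v) :
    Measurable (Function.uncurry (gradProd n s u v)) := by
  unfold gradProd Function.uncurry
  refine Finset.measurable_fun_sum _ fun a _ => ?_
  exact (measurable_uncurry_extGrad hu a).mul (measurable_uncurry_extGrad hv a)

theorem measurable_uncurry_Pker_convolution_gradProd (hu : BddPartials 1 M u)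
    (hv : BddPartials 1 N v) : Measurable (Function.uncurry fun z =>
      fun x => z ^ (1 - 2 * s) * (Pker n s z ⋆ gradProd n s u v z) x) :=
  (measurable_fst.pow_const _).mul (measurable_uncurry_convolution
    (measurable_uncurry_Pker n s) (measurable_uncurry_gradProd hu hv))

end ExtensionGradient

/-! ### The flux of a product of extensions -/

section ProductFlux

variable {n k : ℕ} {s z c d M N : ℝ} {K K' : ℝ → En n → ℝ} {u v w : En n → ℝ}

theorem hasDerivAt_convolution_const (hK : LocallyDominated K z) (hK' : LocallyDominated K' z)
    (hKd : ∀ᶠ t in 𝓝 z, ∀ y, HasDerivAt (fun t => K t y) (K' t y) t) (hw : BddPartials 0 M w)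
    (x : En n) : HasDerivAt (fun t => (K t ⋆ w) x) ((K' z ⋆ w) x) z := by
  have hderiv := hasDerivAt_convolution hK hK' (w' := fun _ _ => 0) (hw.locally z)
    (BddPartials.zero.locally z) hKd
    (Eventually.of_forall fun t y => hasDerivAt_const t (w y)) x
  have hzero : (K z ⋆ fun _ => (0 : ℝ)) x = 0 := congrFun convolution_zero x
  simpa only [hzero, add_zero] using hderiv

theorem hasDerivAt_Pker_convolution (hs : 0 < s) (hz : 0 < z) (hw : BddPartials k M w)
    (x : En n) : HasDerivAt (fun z => (Pker n s z ⋆ w) x) ((dzPker n s z ⋆ w) x) z :=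
  hasDerivAt_convolution_const (locallyDominated_Pker n hs hz) (locallyDominated_dzPker n hs hz)
    ((lt_mem_nhds hz).mono fun _ ht => hasDerivAt_Pker hs ht) (hw.of_le k.zero_le) x

theorem hasDerivAt_conormalKer_convolution (hs : 0 < s) (hz : 0 < z) (hw : BddPartials k M w)
    (x : En n) :
    HasDerivAt (fun z => (conormalKer n s z ⋆ w) x) ((dzConormalKer n s z ⋆ w) x) z :=
  hasDerivAt_convolution_const (locallyDominated_conormalKer n hs hz)
    (locallyDominated_dzConormalKer n hs hz)
    ((lt_mem_nhds hz).mono fun _ ht => hasDerivAt_conormalKer hs ht) (hw.of_le k.zero_le) x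

/-- The product `U V` of the extensions of `u` and `v`. -/
def extProd (n : ℕ) (s : ℝ) (u v : En n → ℝ) (z : ℝ) (x : En n) : ℝ :=
  (Pker n s z ⋆ u) x * (Pker n s z ⋆ v) x

/-- The Leibniz expression `(D U) V + U (D V)`, where the first-order operator `D` is given by
convolution of the boundary data with `K`: `K = dzPker` gives `∂_z (U V)`, and `K = conormalKer`
gives `z^{1-2s} ∂_z (U V)`. -/
def extLeibniz (K : ℝ → En n → ℝ) (s : ℝ) (u v : En n → ℝ) (z : ℝ) (x : En n) : ℝ :=
  (K z ⋆ u) x * (Pker n s z ⋆ v) x + (Pker n s z ⋆ u) x * (K z ⋆ v) x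

/-- The flux `P_z ∗ (z^{1-2s} ∂_z F) - (z^{1-2s} ∂_z P_z) ∗ F` of the product `F = U V`. -/
def prodFlux (n : ℕ) (s : ℝ) (u v : En n → ℝ) (z : ℝ) (x : En n) : ℝ :=
  (Pker n s z ⋆ extLeibniz (conormalKer n s) s u v z) x - (conormalKer n s z ⋆ extProd n s u v z) x

theorem BddPartials.extProd (hs : 0 < s) (hz : 0 < z) (hu : BddPartials k M u)
    (hv : BddPartials k N v) : BddPartials k (2 ^ k * (M * N)) (extProd n s u v z) :=
  (hu.Pker_convolution hs hz).mul (hv.Pker_convolution hs hz)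

theorem BddPartials.extLeibniz (hs : 0 < s) (hz : 0 < z) (hu : BddPartials k M u)
    (hv : BddPartials k N v) (hKu : BddPartials k c (K z ⋆ u)) (hKv : BddPartials k d (K z ⋆ v)) :
    BddPartials k (2 ^ k * (c * N) + 2 ^ k * (M * d)) (extLeibniz K s u v z) :=
  (hKu.mul (hv.Pker_convolution hs hz)).add ((hu.Pker_convolution hs hz).mul hKv)

theorem LocallyBddPartials.extProd (hs : 0 < s) (hz : 0 < z) (hu : BddPartials k M u)
    (hv : BddPartials k N v) : LocallyBddPartials k (extProd n s u v) z :=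
  ((hu.locally z).convolution (locallyDominated_Pker n hs hz)).mul
    ((hv.locally z).convolution (locallyDominated_Pker n hs hz))

theorem LocallyBddPartials.extLeibniz (hs : 0 < s) (hz : 0 < z) (hK : LocallyDominated K z)
    (hu : BddPartials k M u) (hv : BddPartials k N v) :
    LocallyBddPartials k (extLeibniz K s u v) z := by
  have hP := locallyDominated_Pker n hs hz
  exact (((hu.locally z).convolution hK).mul ((hv.locally z).convolution hP)).add
    (((hu.locally z).convolution hP).mul ((hv.locally z).convolution hK))

theorem extLeibniz_conormalKer (n : ℕ) (s : ℝ) (u v : En n → ℝ) (z : ℝ) :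
    extLeibniz (conormalKer n s) s u v z =
      fun x => z ^ (1 - 2 * s) * extLeibniz (dzPker n s) s u v z x := by
  funext x
  simp only [extLeibniz, conormalKer_convolution_eq]
  ring

theorem hasDerivAt_extProd (hs : 0 < s) (hz : 0 < z) (hu : BddPartials k M u)
    (hv : BddPartials k N v) (x : En n) :
    HasDerivAt (fun z => extProd n s u v z x) (extLeibniz (dzPker n s) s u v z x) z :=
  (hasDerivAt_Pker_convolution hs hz hu x).mul (hasDerivAt_Pker_convolution hs hz hv x)

/-- The derivative `∂_z (z^{1-2s} ∂_z (U V))`, expanded by the Leibniz rule (see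
`hasDerivAt_extLeibniz_conormalKer`). -/
def dzConormalProd (n : ℕ) (s : ℝ) (u v : En n → ℝ) (z : ℝ) (x : En n) : ℝ :=
  extLeibniz (dzConormalKer n s) s u v z x +
    ((conormalKer n s z ⋆ u) x * (dzPker n s z ⋆ v) x +
      (dzPker n s z ⋆ u) x * (conormalKer n s z ⋆ v) x)

theorem LocallyBddPartials.dzConormalProd (hs : 0 < s) (hz : 0 < z) (hu : BddPartials k M u)
    (hv : BddPartials k N v) : LocallyBddPartials k (dzConormalProd n s u v) z := by
  have hD := locallyDominated_dzPker n hs hz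
  have hQ := locallyDominated_conormalKer n hs hz
  exact (LocallyBddPartials.extLeibniz hs hz (locallyDominated_dzConormalKer n hs hz) hu hv).add
    ((((hu.locally z).convolution hQ).mul ((hv.locally z).convolution hD)).add
      (((hu.locally z).convolution hD).mul ((hv.locally z).convolution hQ)))

theorem hasDerivAt_extLeibniz_conormalKer (hs : 0 < s) (hz : 0 < z) (hu : BddPartials k M u)
    (hv : BddPartials k N v) (x : En n) :
    HasDerivAt (fun z => extLeibniz (conormalKer n s) s u v z x)
      (dzConormalProd n s u v z x) z := by
  refine (((hasDerivAt_conormalKer_convolution hs hz hu x).mul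
    (hasDerivAt_Pker_convolution hs hz hv x)).add ((hasDerivAt_Pker_convolution hs hz hu x).mul
    (hasDerivAt_conormalKer_convolution hs hz hv x))).congr_deriv ?_
  rw [dzConormalProd, extLeibniz]
  ring

theorem dzConormalProd_add_lapX_extProd (hs : 0 < s) (hz : 0 < z) (hu : BddPartials 2 M u)
    (hv : BddPartials 2 N v) (x : En n) :
    dzConormalProd n s u v z x + z ^ (1 - 2 * s) * lapX (extProd n s u v z) x =
      2 * z ^ (1 - 2 * s) * gradProd n s u v z x := by
  have hP := integrable_Pker n hs hz
  have hlap : lapX (extProd n s u v z) x = _ :=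
    lapX_mul (hu.Pker_convolution hs hz) (hv.Pker_convolution hs hz) x
  rw [hlap, gradProd_eq, dzConormalProd, extLeibniz]
  simp only [dzConormalKer_convolution hs hz hu, dzConormalKer_convolution hs hz hv,
    conormalKer_convolution_eq, pd_convolution (hu.of_le one_le_two) hP,
    pd_convolution (hv.of_le one_le_two) hP]
  ring

theorem hasDerivAt_prodFlux (hs : 0 < s) (hz : 0 < z) (hu : BddPartials 2 M u)
    (hv : BddPartials 2 N v) (x : En n) :
    HasDerivAt (fun z => prodFlux n s u v z x)
      (2 * (z ^ (1 - 2 * s) * (Pker n s z ⋆ gradProd n s u v z) x)) z := by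
  have hpos : ∀ᶠ t in 𝓝 z, 0 < t := lt_mem_nhds hz
  have hu₀ : BddPartials 0 M u := hu.of_le zero_le_two
  have hv₀ : BddPartials 0 N v := hv.of_le zero_le_two
  have hP := locallyDominated_Pker n hs hz
  have hD := locallyDominated_dzPker n hs hz
  have hQ := locallyDominated_conormalKer n hs hz
  have hF := hu.extProd hs hz hv
  have hA' := (LocallyBddPartials.dzConormalProd hs hz hu₀ hv₀)
  have hderivP := hasDerivAt_convolution hP hD
    (LocallyBddPartials.extLeibniz hs hz hQ hu₀ hv₀) hA'
    (hpos.mono fun _ ht => hasDerivAt_Pker hs ht)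
    (hpos.mono fun _ ht => hasDerivAt_extLeibniz_conormalKer hs ht hu₀ hv₀) x
  have hderivQ := hasDerivAt_convolution hQ (locallyDominated_dzConormalKer n hs hz)
    (LocallyBddPartials.extProd hs hz hu₀ hv₀) (LocallyBddPartials.extLeibniz hs hz hD hu₀ hv₀)
    (hpos.mono fun _ ht => hasDerivAt_conormalKer hs ht)
    (hpos.mono fun _ ht => hasDerivAt_extProd hs ht hu₀ hv₀) x
  have hcross : (dzPker n s z ⋆ extLeibniz (conormalKer n s) s u v z) x =
      (conormalKer n s z ⋆ extLeibniz (dzPker n s) s u v z) x := by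
    rw [extLeibniz_conormalKer, convolution_const_mul, conormalKer_convolution_eq]
  have hgrad : (Pker n s z ⋆ dzConormalProd n s u v z) x +
      z ^ (1 - 2 * s) * (Pker n s z ⋆ lapX (extProd n s u v z)) x =
        2 * z ^ (1 - 2 * s) * (Pker n s z ⋆ gradProd n s u v z) x := by
    obtain ⟨C, hC⟩ := hA'
    have hsum := convolution_add_of_bddPartials (integrable_Pker n hs hz) hC.self_of_nhds
      (hF.lapX.const_mul (k := 0) (z ^ (1 - 2 * s)))
    simp only [dzConormalProd_add_lapX_extProd hs hz hu hv, convolution_const_mul] at hsum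
    exact (congrFun hsum x).symm
  refine (hderivP.sub hderivQ).congr_deriv ?_
  rw [dzConormalKer_convolution hs hz hF, lapX_convolution hF (integrable_Pker n hs hz), hcross]
  linear_combination hgrad

theorem tendsto_prodFlux_nhdsGT (hs : s ∈ Ioo (0 : ℝ) 1) (hu : BddPartials 4 M u)
    (hv : BddPartials 4 N v) (x : En n) :
    Tendsto (fun z => prodFlux n s u v z x) (𝓝[>] 0)
      (𝓝 (-2 * (betaS s)⁻¹ * Gamma1 n s u v x)) := by
  have hpos : ∀ᶠ z : ℝ in 𝓝[>] 0, 0 < z := self_mem_nhdsWithin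
  have hu₂ : BddPartials 2 M u := hu.of_le (by norm_num)
  have hv₂ : BddPartials 2 N v := hv.of_le (by norm_num)
  have hconormal {w : En n → ℝ} {C : ℝ} (hw : BddPartials 2 C w) :=
    tendsto_conormalKer_convolution (F := fun _ => w) hs (Eventually.of_forall fun _ => hw) hw
      (fun _ => tendsto_const_nhds) x
  have hA : Tendsto (fun z => extLeibniz (conormalKer n s) s u v z x) (𝓝[>] 0)
      (𝓝 ((betaS s)⁻¹ * Lam n s u x * v x + u x * ((betaS s)⁻¹ * Lam n s v x))) :=
    ((hconormal hu₂).mul (tendsto_Pker_convolution hs hv₂ x)).add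
      ((tendsto_Pker_convolution hs hu₂ x).mul (hconormal hv₂))
  have hPA := tendsto_Pker_convolution_sub hs (hpos.mono fun z hz => hu₂.extLeibniz hs.1 hz hv₂
    (hu.conormalKer_convolution hs hz) (hv.conormalKer_convolution hs hz)) x
  have hQF := tendsto_conormalKer_convolution hs (hpos.mono fun z hz => hu₂.extProd hs.1 hz hv₂)
    (hu₂.mul hv₂)
    (fun x => (tendsto_Pker_convolution hs hu₂ x).mul (tendsto_Pker_convolution hs hv₂ x)) x
  convert (hPA.add hA).sub hQF using 2
  · rw [sub_add_cancel, prodFlux]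
  · rw [Gamma1]
    ring

theorem tendsto_prodFlux_atTop (hs : 0 < s) (hu : BddPartials k M u) (hv : BddPartials k N v)
    (x : En n) : Tendsto (fun z => prodFlux n s u v z x) atTop (𝓝 0) := by
  have hu₀ : BddPartials 0 M u := hu.of_le k.zero_le
  have hv₀ : BddPartials 0 N v := hv.of_le k.zero_le
  have hdecay : Tendsto (fun z : ℝ => 3 * (n + 2 * s) * (M * N) * z ^ (-(2 * s))) atTop (𝓝 0) := by
    simpa only [mul_zero] using
      (tendsto_rpow_neg_atTop (by positivity : 0 < 2 * s)).const_mul (3 * (n + 2 * s) * (M * N))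
  refine squeeze_zero_norm' ?_ hdecay
  filter_upwards [eventually_gt_atTop 0] with z hz
  have hconormal {w : En n → ℝ} {C : ℝ} (hw : BddPartials 0 C w) :
      BddPartials 0 ((n + 2 * s) * z ^ (-(2 * s)) * C) (conormalKer n s z ⋆ w) :=
    ⟨(hw.convolution (integrable_conormalKer n hs hz)).continuous,
      norm_conormalKer_convolution_le hs hz hw⟩
  have hA := (hu₀.extLeibniz hs hz hv₀ (hconormal hu₀) (hconormal hv₀)).Pker_convolution hs hz
  have hF := hconormal (hu₀.extProd hs hz hv₀)
  refine (norm_sub_le_of_le (hA.norm_le x) (hF.norm_le x)).trans_eq ?_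
  ring

theorem ae_bddPartials_rpow_mul_Pker_convolution_gradProd (hs : s ∈ Ioo (0 : ℝ) 1)
    (hu : BddPartials (k + 2) M u) (hv : BddPartials (k + 2) N v) :
    ∀ᵐ z ∂volume.restrict (Ioi (0 : ℝ)),
      BddPartials k (gradProdConst n k s * (M * N) * (z ^ (1 - 2 * s) * gradDecay s z ^ 2))
        (fun x => z ^ (1 - 2 * s) * (Pker n s z ⋆ gradProd n s u v z) x) := by
  filter_upwards [ae_restrict_mem measurableSet_Ioi] with z (hz : 0 < z)
  refine (((hu.gradProd hs hz hv).Pker_convolution hs.1 hz).const_mul (z ^ (1 - 2 * s))).mono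
    (le_of_eq ?_)
  rw [Real.norm_of_nonneg (by positivity)]
  ring

theorem integrableOn_rpow_mul_Pker_convolution_gradProd (hs : s ∈ Ioo (0 : ℝ) 1)
    (hu : BddPartials 2 M u) (hv : BddPartials 2 N v) (x : En n) :
    IntegrableOn (fun z => z ^ (1 - 2 * s) * (Pker n s z ⋆ gradProd n s u v z) x) (Ioi 0) := by
  have hm := measurable_uncurry_Pker_convolution_gradProd (s := s) (hu.of_le one_le_two)
    (hv.of_le one_le_two)
  exact ((integrableOn_rpow_mul_gradDecay_sq hs).const_mul _).mono'
    hm.of_uncurry_right.aestronglyMeasurable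
    ((ae_bddPartials_rpow_mul_Pker_convolution_gradProd (k := 0) hs hu hv).mono
      fun z hz => hz.norm_le x)

theorem Gamma1_eq_integral (hs : s ∈ Ioo (0 : ℝ) 1) (hu : BddPartials 4 M u)
    (hv : BddPartials 4 N v) (x : En n) :
    Gamma1 n s u v x = betaS s *
      ∫ z in Ioi 0, z ^ (1 - 2 * s) * (Pker n s z ⋆ gradProd n s u v z) x := by
  have hint := (integrableOn_rpow_mul_Pker_convolution_gradProd hs (hu.of_le (by norm_num))
    (hv.of_le (by norm_num)) x).const_mul 2
  have hFTC := integral_Ioi_deriv_mul_eq_sub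
    (fun z hz => hasDerivAt_prodFlux hs.1 hz (hu.of_le (by norm_num)) (hv.of_le (by norm_num)) x)
    (fun z _ => hasDerivAt_const z (1 : ℝ))
    (by simpa only [IntegrableOn, Pi.mul_def, Pi.add_def, mul_one, mul_zero, add_zero] using hint)
    (by simpa only [Pi.mul_def, mul_one] using tendsto_prodFlux_nhdsGT hs hu hv x)
    (by simpa only [Pi.mul_def, mul_one] using tendsto_prodFlux_atTop hs.1 hu hv x)
  simp only [mul_one, mul_zero, add_zero, integral_const_mul] at hFTC
  have := (betaS_pos hs).ne'
  field_simp at hFTC ⊢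
  linear_combination -hFTC / 2

end ProductFlux

/-! ### Second-order carré du champ -/

section Gamma2

variable {n : ℕ} {s z M N : ℝ} {u v : En n → ℝ}

/-- The integrand `B_z + G_z` of the representation of `Γ₂`. -/
def gamma2Slice (n : ℕ) (s : ℝ) (u : En n → ℝ) (z : ℝ) (y : En n) : ℝ :=
  ((1 / 2) * Lam n s (fun y' => ∑ i, (pd i (fun y'' => CSext n s u y'' z) y') ^ 2) y
      - ∑ i, pd i (fun y' => CSext n s u y' z) y * pd i (Lam n s (fun y' => CSext n s u y' z)) y)
    + Gamma1 n s (fun y' => deriv (CSext n s u y') z) (fun y' => deriv (CSext n s u y') z) y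

theorem CSext_slice_eq (n : ℕ) (s : ℝ) (u : En n → ℝ) (z : ℝ) :
    (fun y => CSext n s u y z) = Pker n s z ⋆ u :=
  Pconv_eq_convolution n s z u

theorem deriv_CSext (hs : 0 < s) (hz : 0 < z) (hu : BddPartials 0 M u) (y : En n) :
    deriv (CSext n s u y) z = (dzPker n s z ⋆ u) y := by
  have hslice : CSext n s u y = fun z => (Pker n s z ⋆ u) y :=
    funext fun z => congrFun (CSext_slice_eq n s u z) y
  rw [hslice]
  exact (hasDerivAt_Pker_convolution hs hz hu y).deriv

theorem gamma2Slice_eq (hs : s ∈ Ioo (0 : ℝ) 1) (hz : 0 < z) (hu : BddPartials 3 M u) :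
    gamma2Slice n s u z =
      fun y => 1 / 2 * Lam n s (gradProd n s u u z) y - gradProd n s u (Lam n s u) z y := by
  have hu₁ : BddPartials 1 M u := hu.of_le (by norm_num)
  have hu₂ : BddPartials 2 M u := hu.of_le (by norm_num)
  have hP := integrable_Pker n hs.1 hz
  have hU := hu₂.convolution (integrable_dzPker n hs.1 hz)
  have hgrad : Lam n s (gradProd n s u u z) = fun y =>
      Lam n s (fun y => (dzPker n s z ⋆ u) y * (dzPker n s z ⋆ u) y) y +
        Lam n s (fun y => ∑ i, (Pker n s z ⋆ pd i u) y * (Pker n s z ⋆ pd i u) y) y := by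
    rw [← Lam_add hs (hU.mul hU) (BddPartials.sum Finset.univ fun i =>
      ((hu.pd i).convolution hP).mul ((hu.pd i).convolution hP))]
    exact congrArg _ (funext (gradProd_eq u u z))
  have hLamU := Lam_convolution hs hu₂ hP (continuous_Pker s hz).measurable
  have hLamUz := Lam_convolution hs hu₂ (integrable_dzPker n hs.1 hz)
    (continuous_dzPker s hz).measurable
  have hpdLam (i : Fin n) : pd i (Pker n s z ⋆ Lam n s u) = Pker n s z ⋆ pd i (Lam n s u) :=
    pd_convolution (hu.Lam hs) hP i
  funext y
  simp only [gamma2Slice, Gamma1, CSext_slice_eq, deriv_CSext hs.1 hz (hu.of_le (Nat.zero_le 3)),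
    hgrad, gradProd_eq, pd_convolution hu₁ hP, sq, hLamU, hLamUz, hpdLam]
  ring

theorem Pker_convolution_gamma2Slice (hs : s ∈ Ioo (0 : ℝ) 1) (hz : 0 < z)
    (hu : BddPartials 4 M u) (x : En n) :
    (Pker n s z ⋆ gamma2Slice n s u z) x =
      1 / 2 * (Pker n s z ⋆ Lam n s (gradProd n s u u z)) x -
        (Pker n s z ⋆ gradProd n s u (Lam n s u) z) x := by
  have hLam := ((hu.gradProd hs hz hu).Lam (k := 0) hs).const_mul (1 / 2)
  have hu₂ : BddPartials 2 M u := hu.of_le (by norm_num)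
  have hgrad := (hu₂.gradProd (k := 0) hs hz (hu.Lam hs)).const_mul (-1)
  have hsum := congrFun (convolution_add_of_bddPartials (integrable_Pker n hs.1 hz) hLam hgrad) x
  rw [gamma2Slice_eq hs hz (hu.of_le (by norm_num))]
  simp only [convolution_const_mul] at hsum
  simpa only [neg_one_mul, ← sub_eq_add_neg] using hsum

theorem Lam_rpow_mul_Pker_convolution_gradProd (hs : s ∈ Ioo (0 : ℝ) 1) (hz : 0 < z)
    (hu : BddPartials 4 M u) (hv : BddPartials 4 N v) :
    Lam n s (fun x => z ^ (1 - 2 * s) * (Pker n s z ⋆ gradProd n s u v z) x) =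
      fun x => z ^ (1 - 2 * s) * (Pker n s z ⋆ Lam n s (gradProd n s u v z)) x := by
  have hg := hu.gradProd hs hz hv
  rw [Lam_const_mul hs (hg.Pker_convolution hs.1 hz),
    Lam_convolution hs hg (integrable_Pker n hs.1 hz) (continuous_Pker s hz).measurable]

theorem integrableOn_rpow_mul_Pker_convolution_Lam_gradProd (hs : s ∈ Ioo (0 : ℝ) 1)
    (hu : BddPartials 4 M u) (hv : BddPartials 4 N v) (x : En n) :
    IntegrableOn (fun z => z ^ (1 - 2 * s) * (Pker n s z ⋆ Lam n s (gradProd n s u v z)) x)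
      (Ioi 0) := by
  have hm := measurable_uncurry_Pker_convolution_gradProd (s := s) (hu.of_le (by norm_num))
    (hv.of_le (by norm_num))
  exact IntegrableOn.congr_fun
    (integrable_Lam hs hm (ae_bddPartials_rpow_mul_Pker_convolution_gradProd hs hu hv)
      ((integrableOn_rpow_mul_gradDecay_sq hs).const_mul _) x)
    (fun z hz => congrFun (Lam_rpow_mul_Pker_convolution_gradProd hs hz hu hv) x)
    measurableSet_Ioi

theorem Lam_Gamma1_eq_integral (hs : s ∈ Ioo (0 : ℝ) 1) (hu : BddPartials 4 M u)
    (hv : BddPartials 4 N v) (x : En n) :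
    Lam n s (Gamma1 n s u v) x = betaS s *
      ∫ z in Ioi 0, z ^ (1 - 2 * s) * (Pker n s z ⋆ Lam n s (gradProd n s u v z)) x := by
  have hm := measurable_uncurry_Pker_convolution_gradProd (s := s) (hu.of_le (by norm_num))
    (hv.of_le (by norm_num))
  have hbdd := ae_bddPartials_rpow_mul_Pker_convolution_gradProd (k := 2) hs hu hv
  have hdom := (integrableOn_rpow_mul_gradDecay_sq hs).const_mul (gradProdConst n 2 s * (M * N))
  have hintegral := BddPartials.integral
    (fun _ => hm.of_uncurry_right.aestronglyMeasurable) hbdd hdom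
  rw [funext (Gamma1_eq_integral hs hu hv), congrFun (Lam_const_mul hs hintegral _) x,
    Lam_integral hs hm hbdd hdom x]
  exact congrArg _ (setIntegral_congr_fun measurableSet_Ioi fun z hz =>
    congrFun (Lam_rpow_mul_Pker_convolution_gradProd hs hz hu hv) x)

theorem Gamma2_eq_integral_Pker_convolution (hs : s ∈ Ioo (0 : ℝ) 1) (hu : BddPartials 6 M u)
    (x : En n) : 1 / 2 * Lam n s (Gamma1 n s u u) x - Gamma1 n s u (Lam n s u) x =
      betaS s * ∫ z in Ioi 0, (Pker n s z ⋆ gamma2Slice n s u z) x * z ^ (1 - 2 * s) := by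
  have hu₄ : BddPartials 4 M u := hu.of_le (by norm_num)
  have hint := integrableOn_rpow_mul_Pker_convolution_Lam_gradProd hs hu₄ hu₄ x
  have hu₂ : BddPartials 2 M u := hu.of_le (by norm_num)
  have hint' := integrableOn_rpow_mul_Pker_convolution_gradProd hs hu₂ (hu₄.Lam hs) x
  rw [Lam_Gamma1_eq_integral hs hu₄ hu₄, Gamma1_eq_integral hs hu₄ (hu.Lam hs), mul_left_comm,
    ← mul_sub, ← integral_const_mul, ← integral_sub (hint.const_mul _) hint']
  refine congrArg _ (setIntegral_congr_fun measurableSet_Ioi fun z hz => ?_)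
  rw [Pker_convolution_gamma2Slice hs hz hu₄]
  ring

end Gamma2

theorem Gamma2_representation_general {n : ℕ} {s : ℝ} (hs0 : 0 < s) (hs1 : s < 1)
    {u : En n → ℝ} (hu : ContDiff ℝ 6 u)
    (hbound : ∀ j ≤ 6, ∃ C, ∀ x, ‖iteratedFDeriv ℝ j u x‖ ≤ C) (x : En n) :
    (1 / 2) * Lam n s (Gamma1 n s u u) x - Gamma1 n s u (Lam n s u) x =
      betaS s * ∫ z in Ioi (0 : ℝ), Pconv n s z (gamma2Slice n s u z) x * z ^ (1 - 2 * s) := by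
  obtain ⟨M, hM⟩ := BddPartials.exists_of_iteratedFDeriv_le hu hbound
  simpa only [Pconv_eq_convolution] using Gamma2_eq_integral_Pker_convolution ⟨hs0, hs1⟩ hM x

/-- **Representation of the second-order carré du champ `Γ₂`** (Corollary, Euclidean case):
`Γ₂(u) = β_s ∫₀^∞ P_z^{(s)} ∗ (B_z + Γ₁(∂_z U(·,z))) z^{1-2s} dz`, where
`B_z = ½ Λ^s(|∇_x U(·,z)|²) - ∇_x U(·,z)·∇_x(Λ^s U(·,z))` on each horizontal slice. -/
theorem Gamma2_representation (n : ℕ) (hn : 1 ≤ n) (s : ℝ) (hs0 : 0 < s) (hs1 : s < 1)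
    (u : En n → ℝ) (hu : ContDiff ℝ (⊤ : ℕ∞) u) (huc : HasCompactSupport u)
    (hint : ∫⁻ p in (univ : Set (En n)) ×ˢ Ioi (0 : ℝ),
      ENNReal.ofReal
        (p.2 ^ (1 - 2 * s) *
          ((∑ i, ∑ j, (pd i (pd j (fun y => CSext n s u y p.2)) p.1) ^ 2)
            + ∑ i, (pd i (fun y => deriv (CSext n s u y) p.2) p.1) ^ 2)) < ⊤) :
    ∀ x : En n,
      (1 / 2) * Lam n s (Gamma1 n s u u) x - Gamma1 n s u (Lam n s u) x =
        betaS s *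
          ∫ z in Ioi (0 : ℝ),
            Pconv n s z
              (fun y =>
                ((1 / 2) * Lam n s (fun y' => ∑ i, (pd i (fun y'' => CSext n s u y'' z) y') ^ 2) y
                    - ∑ i, pd i (fun y' => CSext n s u y' z) y
                        * pd i (Lam n s (fun y' => CSext n s u y' z)) y)
                  + Gamma1 n s (fun y' => deriv (CSext n s u y') z)
                      (fun y' => deriv (CSext n s u y') z) y) x
              * z ^ (1 - 2 * s) :=
  Gamma2_representation_general hs0 hs1 (contDiff_infty.1 hu 6) fun j _ =>
    (huc.iteratedFDeriv j).exists_bound_of_continuous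
      (hu.continuous_iteratedFDeriv (mod_cast le_top))
end
end

section
/- Let s ∈ (0,1), q > 1, and u ∈ C_c^∞(ℝⁿ). Then ∫_{ℝⁿ} |u(x)|^{q−2} u(x) · (−Δ)^s u(x) dx ≥ (4(q−1)/q²) · (C(n,s)/2) · ∬_{ℝⁿ×ℝⁿ} ( |u(x)|^{q/2} − |u(y)|^{q/2} )² / |x−y|^{n+2s} dx dy (the Stroock–Varopoulos inequality). -/
open MeasureTheory Filter Set
open scoped Topology ENNReal NNReal

noncomputable section

/-! For an integrable even kernel `J`, the operator `A u x = ∫ (u x - u y) J (x - y) dy` satisfies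
`∫ w A u = ½ ∬ (w x - w y) (u x - u y) J (x - y)` by Fubini and the symmetry `x ↔ y`. The kernel
`|z|^{-n-2s}` is reached by cutting off `|z| ≤ ε` and letting `ε → 0`. The left-hand side converges
because evenness turns the cut-off operator into an integral of second differences of `u`, which
are `O(min 1 |z|²)`. For `w = |u|^{q-2} u` the right-hand integrand is nonnegative, so its limit is
the full integral; it dominates the Gagliardo energy of `|u|^{q/2}` pointwise, by Cauchy–Schwarz
applied to `b^{q/2} - a^{q/2} = (q/2) ∫ t^{q/2-1} dt` over `[a, b]`. -/

section Real

variable {a b : ℝ} {f : ℝ → ℝ}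

lemma sq_intervalIntegral_le (hab : a ≤ b) (hf : IntervalIntegrable f volume a b)
    (hf2 : IntervalIntegrable (fun t => f t ^ 2) volume a b) :
    (∫ t in a..b, f t) ^ 2 ≤ (b - a) * ∫ t in a..b, f t ^ 2 := by
  rcases hab.eq_or_lt with rfl | hlt
  · simp
  have hpos : 0 < b - a := sub_pos.2 hlt
  have jensen : (⨍ t in a..b, f t) ^ 2 ≤ ⨍ t in a..b, f t ^ 2 := by
    rw [uIoc_of_le hab]
    rw [intervalIntegrable_iff_integrableOn_Ioc_of_le hab] at hf hf2
    exact even_two.convexOn_pow.map_set_average_le (continuous_pow 2).continuousOn isClosed_univ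
      (by simpa using hlt) (by simp) (by simp) hf hf2
  rw [interval_average_eq, interval_average_eq, smul_eq_mul, smul_eq_mul] at jensen
  field_simp at jensen
  exact jensen

variable {q : ℝ}

lemma abs_rpow_sub_two_mul_abs (hq : q ≠ 1) (t : ℝ) : |t| ^ (q - 2) * |t| = |t| ^ (q - 1) := by
  rw [← Real.rpow_add_one' (abs_nonneg t) (by contrapose! hq; linarith)]
  ring_nf

lemma sq_rpow_half {t : ℝ} (ht : 0 ≤ t) (p : ℝ) : (t ^ (p / 2)) ^ 2 = t ^ p := by
  rw [← Real.rpow_mul_natCast ht]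
  norm_num

lemma sq_rpow_half_sub_le_of_le (hq : 1 < q) (ha : 0 ≤ a) (hab : a ≤ b) :
    4 * (q - 1) / q ^ 2 * (b ^ (q / 2) - a ^ (q / 2)) ^ 2 ≤
      (b ^ (q - 1) - a ^ (q - 1)) * (b - a) := by
  have hsq {t : ℝ} (ht : a < t) : t ^ (q - 2) = (t ^ (q / 2 - 1)) ^ 2 := by
    rw [← sq_rpow_half (ha.trans ht.le)]
    ring_nf
  have int_half : ∫ t in a..b, t ^ (q / 2 - 1) = (b ^ (q / 2) - a ^ (q / 2)) / (q / 2) := by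
    rw [integral_rpow (Or.inl (by linarith)), sub_add_cancel]
  have int_sq : ∫ t in a..b, (t ^ (q / 2 - 1)) ^ 2 = (b ^ (q - 1) - a ^ (q - 1)) / (q - 1) := by
    rw [← intervalIntegral.integral_congr_Ioo_of_le hab fun t ht => hsq ht.1,
      integral_rpow (Or.inl (by linarith))]
    ring_nf
  have cauchy_schwarz := sq_intervalIntegral_le hab
    (intervalIntegral.intervalIntegrable_rpow' (r := q / 2 - 1) (by linarith))
    ((intervalIntegral.intervalIntegrable_rpow' (r := q - 2) (by linarith)).congr
      fun t ht => hsq (uIoc_of_le hab ▸ ht).1)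
  rw [int_half, int_sq] at cauchy_schwarz
  have hq1 : 0 < q - 1 := by linarith
  calc 4 * (q - 1) / q ^ 2 * (b ^ (q / 2) - a ^ (q / 2)) ^ 2
      = (q - 1) * ((b ^ (q / 2) - a ^ (q / 2)) / (q / 2)) ^ 2 := by field_simp; ring
    _ ≤ (q - 1) * ((b - a) * ((b ^ (q - 1) - a ^ (q - 1)) / (q - 1))) := by gcongr
    _ = (b ^ (q - 1) - a ^ (q - 1)) * (b - a) := by field_simp

lemma sq_rpow_half_sub_le_add (hq : 1 < q) (ha : 0 ≤ a) (hb : 0 ≤ b) :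
    4 * (q - 1) / q ^ 2 * (a ^ (q / 2) - b ^ (q / 2)) ^ 2 ≤
      (a ^ (q - 1) + b ^ (q - 1)) * (a + b) := by
  have hconst : 4 * (q - 1) / q ^ 2 ≤ 1 := by
    rw [div_le_one (by positivity)]
    nlinarith [sq_nonneg (q - 2)]
  have hmul {t : ℝ} (ht : 0 ≤ t) : t ^ q = t ^ (q - 1) * t := by
    rw [← Real.rpow_add_one' ht (by linarith), sub_add_cancel]
  have hcross : 0 ≤ a ^ (q - 1) * b + b ^ (q - 1) * a := by positivity
  have hprod : 0 ≤ a ^ (q / 2) * b ^ (q / 2) := by positivity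
  calc 4 * (q - 1) / q ^ 2 * (a ^ (q / 2) - b ^ (q / 2)) ^ 2
      ≤ (a ^ (q / 2) - b ^ (q / 2)) ^ 2 := mul_le_of_le_one_left (sq_nonneg _) hconst
    _ ≤ (a ^ (q / 2)) ^ 2 + (b ^ (q / 2)) ^ 2 := by linarith [sub_sq (a ^ (q / 2)) (b ^ (q / 2))]
    _ = a ^ (q - 1) * a + b ^ (q - 1) * b := by
      rw [sq_rpow_half ha, sq_rpow_half hb, hmul ha, hmul hb]
    _ ≤ (a ^ (q - 1) + b ^ (q - 1)) * (a + b) := by linarith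

lemma sq_abs_rpow_half_sub_le (hq : 1 < q) (a b : ℝ) :
    4 * (q - 1) / q ^ 2 * (|a| ^ (q / 2) - |b| ^ (q / 2)) ^ 2 ≤
      (|a| ^ (q - 2) * a - |b| ^ (q - 2) * b) * (a - b) := by
  wlog hab : |b| ≤ |a| generalizing a b
  · linarith [this b a (le_of_not_ge hab)]
  have same_sign := sq_rpow_half_sub_le_of_le hq (abs_nonneg b) hab
  have opposite_sign := sq_rpow_half_sub_le_add hq (abs_nonneg a) (abs_nonneg b)
  rw [← abs_rpow_sub_two_mul_abs hq.ne', ← abs_rpow_sub_two_mul_abs hq.ne']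
    at same_sign opposite_sign
  rcases abs_cases a with ⟨ha, -⟩ | ⟨ha, -⟩ <;> rcases abs_cases b with ⟨hb, -⟩ | ⟨hb, -⟩ <;>
    rw [ha, hb] at same_sign opposite_sign ⊢ <;> linarith

end Real

/-- The symmetric second difference of `u` at `x` with increment `z`, with the sign of a
positive operator. -/
def secondDiff {G : Type*} [AddGroup G] (u : G → ℝ) (x z : G) : ℝ :=
  2 * u x - u (x + z) - u (x - z)

/-- The integrand of the bilinear energy form with kernel `J`; the form itself is half the integral
of this density over the product. -/
def energyDensity {G : Type*} [Sub G] (J : G → ℝ) (w u : G → ℝ) (p : G × G) : ℝ :=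
  (w p.1 - w p.2) * (u p.1 - u p.2) * J (p.1 - p.2)

/-- The nonlocal difference operator with kernel `J`, meant for integrable `J`; singular kernels are
treated by `levyOp`. -/
def nonlocalOp {G : Type*} [Sub G] [MeasurableSpace G] (μ : Measure G) (J u : G → ℝ) (x : G) : ℝ :=
  ∫ y, (u x - u y) * J (x - y) ∂μ

lemma abs_sub_le_two_mul {X : Type*} {u : X → ℝ} {M : ℝ} (hM : ∀ x, |u x| ≤ M) (x y : X) :
    |u x - u y| ≤ 2 * M := by
  linarith [abs_sub (u x) (u y), hM x, hM y]

section IntegrableKernel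

variable {G : Type*} [AddCommGroup G] {J u w : G → ℝ} {M : ℝ}

lemma energyDensity_eq_add_swap (hJ_even : J.Even) (p : G × G) :
    energyDensity J w u p = w p.1 * ((u p.1 - u p.2) * J (p.1 - p.2)) +
      w p.2 * ((u p.2 - u p.1) * J (p.2 - p.1)) := by
  rw [energyDensity, ← neg_sub p.1 p.2, hJ_even]
  ring

variable [MeasurableSpace G] [MeasurableAdd₂ G] [MeasurableNeg G] {μ : Measure G}

lemma nonlocalOp_eq_integral_secondDiff [μ.IsAddLeftInvariant] [μ.IsNegInvariant]
    (hJ : Integrable J μ) (hJ_even : J.Even) (hu : Measurable u) (hM : ∀ x, |u x| ≤ M) (x : G) :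
    nonlocalOp μ J u x = 1 / 2 * ∫ z, secondDiff u x z * J z ∂μ := by
  have int_sub : Integrable (fun z => (u x - u (x - z)) * J z) μ :=
    hJ.bdd_mul (Measurable.aestronglyMeasurable (by fun_prop))
      (ae_of_all _ fun z => abs_sub_le_two_mul hM x (x - z))
  have int_add : Integrable (fun z => (u x - u (x + z)) * J z) μ :=
    hJ.bdd_mul (Measurable.aestronglyMeasurable (by fun_prop))
      (ae_of_all _ fun z => abs_sub_le_two_mul hM x (x + z))
  have eq_sub : nonlocalOp μ J u x = ∫ z, (u x - u (x - z)) * J z ∂μ := by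
    rw [nonlocalOp, ← integral_sub_left_eq_self _ _ x]
    simp only [sub_sub_cancel]
  have eq_add : nonlocalOp μ J u x = ∫ z, (u x - u (x + z)) * J z ∂μ := by
    rw [eq_sub, ← integral_neg_eq_self]
    simp only [sub_neg_eq_add, hJ_even _]
  have eq_sum : ∫ z, secondDiff u x z * J z ∂μ =
      ∫ z, ((u x - u (x - z)) * J z + (u x - u (x + z)) * J z) ∂μ := by
    congr 1 with z
    rw [secondDiff]
    ring
  rw [eq_sum, integral_add int_sub int_add, ← eq_sub, ← eq_add]
  ring

variable [SFinite μ]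

lemma stronglyMeasurable_nonlocalOp (hJ : Measurable J) (hu : Measurable u) :
    StronglyMeasurable (nonlocalOp μ J u) := by
  refine StronglyMeasurable.integral_prod_right (Measurable.stronglyMeasurable ?_)
  simp only [Function.uncurry_def]
  fun_prop

variable [μ.IsAddLeftInvariant]

lemma integrable_mul_sub_mul_kernel (hJ : Integrable J μ) (hJ_even : J.Even) (hw : Integrable w μ)
    (hu : Measurable u) (hM : ∀ x, |u x| ≤ M) :
    Integrable (fun p : G × G => w p.1 * ((u p.1 - u p.2) * J (p.1 - p.2))) (μ.prod μ) := by
  have dom : Integrable (fun p : G × G => w p.1 * J (p.2 - p.1)) (μ.prod μ) :=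
    (hw.convolution_integrand (ContinuousLinearMap.mul ℝ ℝ) hJ).swap
  refine (dom.bdd_mul (Measurable.aestronglyMeasurable (by fun_prop))
    (ae_of_all _ fun p => abs_sub_le_two_mul hM p.1 p.2)).congr (ae_of_all _ fun p => ?_)
  beta_reduce
  rw [← neg_sub p.1 p.2, hJ_even]
  ring

lemma integrable_energyDensity (hJ : Integrable J μ) (hJ_even : J.Even) (hw : Integrable w μ)
    (hu : Measurable u) (hM : ∀ x, |u x| ≤ M) :
    Integrable (energyDensity J w u) (μ.prod μ) := by
  have h := integrable_mul_sub_mul_kernel hJ hJ_even hw hu hM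
  exact (h.add h.swap).congr (ae_of_all _ fun p => (energyDensity_eq_add_swap hJ_even p).symm)

lemma integral_mul_nonlocalOp (hJ : Integrable J μ) (hJ_even : J.Even) (hw : Integrable w μ)
    (hu : Measurable u) (hM : ∀ x, |u x| ≤ M) :
    ∫ x, w x * nonlocalOp μ J u x ∂μ = 1 / 2 * ∫ p, energyDensity J w u p ∂μ.prod μ := by
  have h := integrable_mul_sub_mul_kernel hJ hJ_even hw hu hM
  have h_swap : Integrable (fun p : G × G => w p.2 * ((u p.2 - u p.1) * J (p.2 - p.1)))
      (μ.prod μ) := h.swap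
  have fubini : ∫ x, w x * nonlocalOp μ J u x ∂μ =
      ∫ p, w p.1 * ((u p.1 - u p.2) * J (p.1 - p.2)) ∂μ.prod μ := by
    simp only [integral_prod _ h, integral_const_mul, nonlocalOp]
  have swap : ∫ p, w p.2 * ((u p.2 - u p.1) * J (p.2 - p.1)) ∂μ.prod μ =
      ∫ p, w p.1 * ((u p.1 - u p.2) * J (p.1 - p.2)) ∂μ.prod μ :=
    integral_prod_swap fun p : G × G => w p.1 * ((u p.1 - u p.2) * J (p.1 - p.2))
  simp only [energyDensity_eq_add_swap hJ_even]
  rw [integral_add h h_swap, swap, fubini]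
  ring

end IntegrableKernel

/-- A symmetric Lévy kernel: the density with respect to `μ` of a symmetric Lévy measure, possibly
non-integrable at the origin. -/
structure IsLevyKernel {E : Type*} [NormedAddCommGroup E] [MeasurableSpace E] (K : E → ℝ)
    (μ : Measure E) : Prop where
  measurable : Measurable K
  nonneg : ∀ z, 0 ≤ K z
  even : K.Even
  integrable_min_mul : Integrable (fun z => min 1 (‖z‖ ^ 2) * K z) μ

/-- The kernel `K` cut off at distance `ε` from the origin. -/
def truncKernel {E : Type*} [Norm E] (K : E → ℝ) (ε : ℝ) : E → ℝ := {z | ε < ‖z‖}.indicator K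

/-- The (positive) Lévy operator with kernel `K`, as a principal value; it carries no normalizing
constant, and is a junk value where the limit does not exist. -/
def levyOp {E : Type*} [NormedAddCommGroup E] [MeasurableSpace E] (μ : Measure E) (K u : E → ℝ)
    (x : E) : ℝ :=
  limUnder (𝓝[>] 0) fun ε => nonlocalOp μ (truncKernel K ε) u x

section Truncation

variable {E : Type*} [NormedAddCommGroup E] {K u w : E → ℝ} {ε : ℝ}

lemma energyDensity_truncKernel :
    energyDensity (truncKernel K ε) w u =
      {p : E × E | ε < ‖p.1 - p.2‖}.indicator (energyDensity K w u) := by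
  ext p
  by_cases hp : ε < ‖p.1 - p.2‖ <;> simp [energyDensity, truncKernel, hp]

variable [MeasurableSpace E] {μ : Measure E}

lemma measurableSet_lt_norm [OpensMeasurableSpace E] (ε : ℝ) : MeasurableSet {z : E | ε < ‖z‖} :=
  measurableSet_lt measurable_const measurable_norm

lemma aecover_lt_norm [OpensMeasurableSpace E] [NullSingletonClass μ] :
    AECover μ (𝓝[>] 0) fun ε : ℝ => {z : E | ε < ‖z‖} where
  ae_eventually_mem := by
    filter_upwards [Measure.ae_ne μ 0] with z hz
    exact mem_nhdsWithin_of_mem_nhds (Iio_mem_nhds (norm_pos_iff.2 hz))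
  measurableSet := measurableSet_lt_norm

lemma integral_mul_truncKernel [OpensMeasurableSpace E] (f : E → ℝ) :
    ∫ z, f z * truncKernel K ε z ∂μ = ∫ z in {z | ε < ‖z‖}, f z * K z ∂μ := by
  rw [← integral_indicator (measurableSet_lt_norm ε)]
  simp only [truncKernel, indicator_mul_right]

variable [BorelSpace E] [SecondCountableTopology E]

lemma measurableSet_lt_norm_sub (ε : ℝ) : MeasurableSet {p : E × E | ε < ‖p.1 - p.2‖} :=
  measurableSet_lt measurable_const (by fun_prop)

lemma aecover_lt_norm_sub [SFinite μ] [μ.IsAddLeftInvariant] [NullSingletonClass μ] :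
    AECover (μ.prod μ) (𝓝[>] 0) fun ε : ℝ => {p : E × E | ε < ‖p.1 - p.2‖} where
  ae_eventually_mem := (quasiMeasurePreserving_sub μ μ).ae aecover_lt_norm.ae_eventually_mem
  measurableSet := measurableSet_lt_norm_sub

end Truncation

namespace IsLevyKernel

variable {E : Type*} [NormedAddCommGroup E] [MeasurableSpace E] {μ : Measure E} {K u w : E → ℝ}
  {M C ε : ℝ}

lemma truncKernel_even (hK : IsLevyKernel K μ) (ε : ℝ) : (truncKernel K ε).Even := fun z => by
  simp only [truncKernel, indicator, mem_ofPred_eq, norm_neg, hK.even z]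

lemma norm_secondDiff_mul_le (hK : IsLevyKernel K μ)
    (hC : ∀ x z, |secondDiff u x z| ≤ C * min 1 (‖z‖ ^ 2)) (x z : E) :
    ‖secondDiff u x z * K z‖ ≤ C * (min 1 (‖z‖ ^ 2) * K z) := by
  rw [norm_mul, Real.norm_of_nonneg (hK.nonneg z), ← mul_assoc]
  exact mul_le_mul_of_nonneg_right (hC x z) (hK.nonneg z)

variable [BorelSpace E]

lemma measurable_truncKernel (hK : IsLevyKernel K μ) (ε : ℝ) : Measurable (truncKernel K ε) :=
  hK.measurable.indicator (measurableSet_lt_norm ε)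

lemma integrable_truncKernel (hK : IsLevyKernel K μ) (hε : 0 < ε) :
    Integrable (truncKernel K ε) μ := by
  refine (integrable_indicator_iff (measurableSet_lt_norm ε)).2 <|
    (hK.integrable_min_mul.const_mul (min 1 (ε ^ 2))⁻¹).integrableOn.mono'
      hK.measurable.aestronglyMeasurable
      ((ae_restrict_iff' (measurableSet_lt_norm ε)).2 (ae_of_all _ fun z (hz : ε < ‖z‖) => ?_))
  rw [Real.norm_of_nonneg (hK.nonneg z), ← mul_assoc, inv_mul_eq_div]
  refine le_mul_of_one_le_left (hK.nonneg z) ((one_le_div (by positivity)).2 ?_)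
  gcongr

variable [SecondCountableTopology E] [μ.IsAddLeftInvariant]

lemma nonlocalOp_truncKernel [μ.IsNegInvariant] (hK : IsLevyKernel K μ) (hu : Measurable u)
    (hM : ∀ x, |u x| ≤ M) (hε : 0 < ε) (x : E) :
    nonlocalOp μ (truncKernel K ε) u x =
      1 / 2 * ∫ z in {z | ε < ‖z‖}, secondDiff u x z * K z ∂μ := by
  rw [nonlocalOp_eq_integral_secondDiff (hK.integrable_truncKernel hε) (hK.truncKernel_even ε)
    hu hM, integral_mul_truncKernel]

lemma abs_nonlocalOp_truncKernel_le [μ.IsNegInvariant] (hK : IsLevyKernel K μ) (hu : Measurable u)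
    (hM : ∀ x, |u x| ≤ M) (hC : ∀ x z, |secondDiff u x z| ≤ C * min 1 (‖z‖ ^ 2)) (hε : 0 < ε)
    (x : E) :
    |nonlocalOp μ (truncKernel K ε) u x| ≤ C / 2 * ∫ z, min 1 (‖z‖ ^ 2) * K z ∂μ := by
  have h_int := hK.integrable_min_mul.const_mul C
  have hle := hK.norm_secondDiff_mul_le hC x
  have hbound := calc |∫ z in {z | ε < ‖z‖}, secondDiff u x z * K z ∂μ|
      ≤ ∫ z in {z | ε < ‖z‖}, C * (min 1 (‖z‖ ^ 2) * K z) ∂μ :=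
        norm_integral_le_of_norm_le h_int.integrableOn (ae_of_all _ hle)
    _ ≤ ∫ z, C * (min 1 (‖z‖ ^ 2) * K z) ∂μ :=
        setIntegral_le_integral h_int (ae_of_all _ fun z => (norm_nonneg _).trans (hle z))
    _ = C * ∫ z, min 1 (‖z‖ ^ 2) * K z ∂μ := integral_const_mul _ _
  rw [hK.nonlocalOp_truncKernel hu hM hε, abs_mul, abs_of_pos one_half_pos]
  linarith

lemma tendsto_nonlocalOp_truncKernel [μ.IsNegInvariant] [NullSingletonClass μ]
    (hK : IsLevyKernel K μ) (hu : Measurable u) (hM : ∀ x, |u x| ≤ M)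
    (hC : ∀ x z, |secondDiff u x z| ≤ C * min 1 (‖z‖ ^ 2)) (x : E) :
    Tendsto (fun ε => nonlocalOp μ (truncKernel K ε) u x) (𝓝[>] 0) (𝓝 (levyOp μ K u x)) := by
  have hmeas : Measurable (fun z => secondDiff u x z * K z) := by
    have := hK.measurable
    unfold secondDiff
    fun_prop
  have h_int : Integrable (fun z => secondDiff u x z * K z) μ :=
    (hK.integrable_min_mul.const_mul C).mono' hmeas.aestronglyMeasurable
      (ae_of_all _ (hK.norm_secondDiff_mul_le hC x))
  refine tendsto_nhds_limUnder ⟨1 / 2 * ∫ z, secondDiff u x z * K z ∂μ, ?_⟩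
  refine ((aecover_lt_norm.integral_tendsto_of_countably_generated h_int).const_mul _).congr' ?_
  filter_upwards [self_mem_nhdsWithin] with ε hε
  exact (hK.nonlocalOp_truncKernel hu hM hε x).symm

variable [SFinite μ]

lemma integrableOn_energyDensity (hK : IsLevyKernel K μ) (hu : Measurable u) (hM : ∀ x, |u x| ≤ M)
    (hw : Integrable w μ) (hε : 0 < ε) :
    IntegrableOn (energyDensity K w u) {p : E × E | ε < ‖p.1 - p.2‖} (μ.prod μ) := by
  rw [← integrable_indicator_iff (measurableSet_lt_norm_sub ε), ← energyDensity_truncKernel]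
  exact integrable_energyDensity (hK.integrable_truncKernel hε) (hK.truncKernel_even ε) hw hu hM

variable [μ.IsNegInvariant] [NullSingletonClass μ]

lemma tendsto_integral_energyDensity (hK : IsLevyKernel K μ) (hu : Measurable u)
    (hM : ∀ x, |u x| ≤ M) (hC : ∀ x z, |secondDiff u x z| ≤ C * min 1 (‖z‖ ^ 2))
    (hw : Integrable w μ) :
    Tendsto (fun ε => ∫ p in {p : E × E | ε < ‖p.1 - p.2‖}, energyDensity K w u p ∂μ.prod μ)
      (𝓝[>] 0) (𝓝 (2 * ∫ x, w x * levyOp μ K u x ∂μ)) := by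
  have hlim : Tendsto (fun ε => ∫ x, w x * nonlocalOp μ (truncKernel K ε) u x ∂μ) (𝓝[>] 0)
      (𝓝 (∫ x, w x * levyOp μ K u x ∂μ)) := by
    refine tendsto_integral_filter_of_dominated_convergence
      (fun x => ‖w x‖ * (C / 2 * ∫ z, min 1 (‖z‖ ^ 2) * K z ∂μ))
      (Eventually.of_forall fun ε => ?_) ?_ (hw.norm.mul_const _) (ae_of_all _ fun x => ?_)
    · exact hw.aestronglyMeasurable.mul
        (stronglyMeasurable_nonlocalOp (hK.measurable_truncKernel ε) hu).aestronglyMeasurable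
    · filter_upwards [self_mem_nhdsWithin] with ε hε
      refine ae_of_all _ fun x => ?_
      rw [norm_mul]
      gcongr
      exact hK.abs_nonlocalOp_truncKernel_le hu hM hC hε x
    · exact (hK.tendsto_nonlocalOp_truncKernel hu hM hC x).const_mul _
  refine (hlim.const_mul 2).congr' ?_
  filter_upwards [self_mem_nhdsWithin] with ε hε
  rw [integral_mul_nonlocalOp (hK.integrable_truncKernel hε) (hK.truncKernel_even ε) hw hu hM,
    energyDensity_truncKernel, integral_indicator (measurableSet_lt_norm_sub ε)]
  ring

-- The density is nonnegative, so convergence of the truncated energies forces its integrability.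
lemma integrable_energyDensity_and_integral_mul_levyOp (hK : IsLevyKernel K μ) (hu : Measurable u)
    (hM : ∀ x, |u x| ≤ M) (hC : ∀ x z, |secondDiff u x z| ≤ C * min 1 (‖z‖ ^ 2))
    (hw : Integrable w μ) (hwu : ∀ x y, 0 ≤ (w x - w y) * (u x - u y)) :
    Integrable (energyDensity K w u) (μ.prod μ) ∧
      ∫ x, w x * levyOp μ K u x ∂μ = 1 / 2 * ∫ p, energyDensity K w u p ∂μ.prod μ := by
  obtain ⟨ε, -, hε_pos, hε_lim⟩ := exists_seq_strictAnti_tendsto (0 : ℝ)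
  have hε : Tendsto ε atTop (𝓝[>] 0) :=
    tendsto_nhdsWithin_iff.2 ⟨hε_lim, Eventually.of_forall hε_pos⟩
  have cover := (aecover_lt_norm_sub (μ := μ)).comp_tendsto hε
  have h_int (k : ℕ) := hK.integrableOn_energyDensity hu hM hw (hε_pos k)
  have hlim := (hK.tendsto_integral_energyDensity hu hM hC hw).comp hε
  have hnonneg : 0 ≤ᵐ[μ.prod μ] energyDensity K w u :=
    ae_of_all _ fun p => mul_nonneg (hwu p.1 p.2) (hK.nonneg _)
  refine ⟨cover.integrable_of_integral_tendsto_of_nonneg_ae _ h_int hnonneg hlim, ?_⟩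
  rw [cover.integral_eq_of_tendsto_of_nonneg_ae _ hnonneg h_int hlim]
  ring

end IsLevyKernel

lemma abs_secondDiff_le_four_mul {G : Type*} [AddGroup G] {u : G → ℝ} {M : ℝ}
    (hM : ∀ x, |u x| ≤ M) (x z : G) : |secondDiff u x z| ≤ 4 * M := by
  have hadd := abs_sub_le_two_mul hM x (x + z)
  have hsub := abs_sub_le_two_mul hM x (x - z)
  calc |secondDiff u x z| = |(u x - u (x + z)) + (u x - u (x - z))| := by rw [secondDiff]; ring_nf
    _ ≤ |u x - u (x + z)| + |u x - u (x - z)| := abs_add_le _ _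
    _ ≤ 4 * M := by linarith

section NormedSpace

variable {E : Type*} [NormedAddCommGroup E] [NormedSpace ℝ E] {u : E → ℝ}

lemma abs_secondDiff_le_of_lipschitzWith_fderiv {L : ℝ≥0} (hu : Differentiable ℝ u)
    (hL : LipschitzWith L (fderiv ℝ u)) (x z : E) : |secondDiff u x z| ≤ 2 * L * ‖z‖ ^ 2 := by
  have hderiv (y : E) :
      HasFDerivAt (fun y => u (x + y) + u (x - y)) (fderiv ℝ u (x + y) - fderiv ℝ u (x - y)) y := by
    have hadd : HasFDerivAt (fun y => u (x + y)) (fderiv ℝ u (x + y)) y :=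
      (hasFDerivAt_comp_add_left x).2 (hu _).hasFDerivAt
    have hsub : HasFDerivAt (fun y => u (x - y)) (-fderiv ℝ u (x - y)) y := by
      simpa [Function.comp_def] using
        (hu (x - y)).hasFDerivAt.comp y ((hasFDerivAt_id y).const_sub x)
    simpa only [sub_eq_add_neg] using hadd.fun_add hsub
  have hderiv_le (y : E) (hy : y ∈ Metric.closedBall 0 ‖z‖) :
      ‖fderiv ℝ u (x + y) - fderiv ℝ u (x - y)‖ ≤ 2 * L * ‖z‖ := by
    rw [mem_closedBall_zero_iff] at hy
    calc ‖fderiv ℝ u (x + y) - fderiv ℝ u (x - y)‖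
        ≤ L * ‖(x + y) - (x - y)‖ := hL.norm_sub_le _ _
      _ = L * ‖y + y‖ := by congr 2; abel
      _ ≤ L * (‖z‖ + ‖z‖) := by gcongr; exact norm_add_le_of_le hy hy
      _ = 2 * L * ‖z‖ := by ring
  have mean_value := (convex_closedBall (0 : E) ‖z‖).norm_image_sub_le_of_norm_hasFDerivWithin_le
    (fun y _ => (hderiv y).hasFDerivWithinAt) hderiv_le
    (Metric.mem_closedBall_self (norm_nonneg z)) (mem_closedBall_zero_iff.2 le_rfl)
  calc |secondDiff u x z| = ‖u (x + z) + u (x - z) - (u (x + 0) + u (x - 0))‖ := by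
        rw [secondDiff, add_zero, sub_zero, Real.norm_eq_abs, ← abs_neg]
        ring_nf
    _ ≤ 2 * L * ‖z‖ * ‖z - 0‖ := mean_value
    _ = 2 * L * ‖z‖ ^ 2 := by rw [sub_zero]; ring

lemma exists_abs_secondDiff_le_mul_min (hu : ContDiff ℝ 2 u) (huc : HasCompactSupport u) :
    ∃ C, ∀ x z, |secondDiff u x z| ≤ C * min 1 (‖z‖ ^ 2) := by
  obtain ⟨M, hM⟩ := huc.exists_bound_of_continuous hu.continuous
  obtain ⟨L, hL⟩ := (hu.fderiv_right (m := 1) le_rfl).lipschitzWith_of_hasCompactSupport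
    (huc.fderiv ℝ) one_ne_zero
  refine ⟨max (4 * M) (2 * L), fun x z => ?_⟩
  rw [mul_min_of_nonneg _ _ (le_max_of_le_right (by positivity)), mul_one]
  refine le_min ((abs_secondDiff_le_four_mul hM x z).trans (le_max_left _ _)) ?_
  calc |secondDiff u x z| ≤ 2 * L * ‖z‖ ^ 2 :=
        abs_secondDiff_le_of_lipschitzWith_fderiv (hu.differentiable two_ne_zero) hL x z
    _ ≤ max (4 * M) (2 * L) * ‖z‖ ^ 2 := by gcongr; exact le_max_right _ _

lemma isLevyKernel_norm_rpow_inv [FiniteDimensional ℝ E] [Nontrivial E] [MeasurableSpace E]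
    [BorelSpace E] {μ : Measure E} [μ.IsAddHaarMeasure] {a : ℝ} (ha : Module.finrank ℝ E < a)
    (ha' : a < Module.finrank ℝ E + 2) : IsLevyKernel (fun z : E => (‖z‖ ^ a)⁻¹) μ where
  measurable := by fun_prop
  nonneg z := by positivity
  even z := by simp only [norm_neg]
  integrable_min_mul := by
    set d := Module.finrank ℝ E
    have hpow {r : ℝ} (hr : 0 < r) : r ^ (d - 1) * (r ^ a)⁻¹ = r ^ ((d : ℝ) - 1 - a) := by
      rw [← Real.rpow_natCast, ← Real.rpow_neg hr.le, ← Real.rpow_add hr,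
        Nat.cast_pred Module.finrank_pos, ← sub_eq_add_neg]
    have near : IntegrableOn (fun r : ℝ => r ^ ((d : ℝ) + 1 - a)) (Ioc 0 1) :=
      (intervalIntegrable_iff_integrableOn_Ioc_of_le zero_le_one).1
        (intervalIntegral.intervalIntegrable_rpow' (by linarith))
    have far : IntegrableOn (fun r : ℝ => r ^ ((d : ℝ) - 1 - a)) (Ioi 1) :=
      integrableOn_Ioi_rpow_of_lt (by linarith) one_pos
    refine (integrable_fun_norm_addHaar μ (f := fun r => min 1 (r ^ 2) * (r ^ a)⁻¹)).2 ?_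
    rw [← Ioc_union_Ioi_eq_Ioi (zero_le_one' ℝ), integrableOn_union]
    refine ⟨near.congr_fun (fun r hr => ?_) measurableSet_Ioc,
      far.congr_fun (fun r hr => ?_) measurableSet_Ioi⟩
    · have hr0 : 0 < r := hr.1
      simp only [smul_eq_mul]
      rw [min_eq_right (pow_le_one₀ hr0.le hr.2), mul_left_comm, hpow hr0, ← Real.rpow_natCast,
        ← Real.rpow_add hr0]
      congr 1
      push_cast
      ring
    · have hr1 : 1 < r := hr
      simp only [smul_eq_mul]
      rw [min_eq_left (one_le_pow₀ hr1.le), one_mul, hpow (one_pos.trans hr1)]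

end NormedSpace

lemma integrable_abs_rpow_of_hasCompactSupport {X : Type*} [TopologicalSpace X]
    [MeasurableSpace X] [OpensMeasurableSpace X] {μ : Measure X} [IsFiniteMeasureOnCompacts μ]
    {u : X → ℝ} {p : ℝ} (hu : Continuous u) (huc : HasCompactSupport u) (hp : 0 < p) :
    Integrable (fun x => |u x| ^ p) μ :=
  have huc' : HasCompactSupport fun x => |u x| ^ p :=
    huc.comp_left (g := fun t => |t| ^ p) (by simp [Real.zero_rpow hp.ne'])
  (hu.abs.rpow_const fun _ => Or.inr hp.le).integrable_of_hasCompactSupport huc'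

theorem Stroock_Varopoulos_general {E : Type*} [NormedAddCommGroup E] [MeasurableSpace E]
    [BorelSpace E] [SecondCountableTopology E] {μ : Measure E} [SFinite μ] [μ.IsAddLeftInvariant]
    [μ.IsNegInvariant] [NullSingletonClass μ] {K u : E → ℝ} {q M C : ℝ} (hK : IsLevyKernel K μ)
    (hq : 1 < q) (hu : Measurable u) (hM : ∀ x, |u x| ≤ M)
    (hC : ∀ x z, |secondDiff u x z| ≤ C * min 1 (‖z‖ ^ 2))
    (h_int : Integrable (fun x => |u x| ^ (q - 1)) μ) :
    Integrable (fun p : E × E => (|u p.1| ^ (q / 2) - |u p.2| ^ (q / 2)) ^ 2 * K (p.1 - p.2))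
        (μ.prod μ) ∧
      4 * (q - 1) / q ^ 2 * (1 / 2 *
          ∫ p, (|u p.1| ^ (q / 2) - |u p.2| ^ (q / 2)) ^ 2 * K (p.1 - p.2) ∂μ.prod μ) ≤
        ∫ x, |u x| ^ (q - 2) * u x * levyOp μ K u x ∂μ := by
  set w : E → ℝ := fun x => |u x| ^ (q - 2) * u x
  set F : E × E → ℝ := fun p => (|u p.1| ^ (q / 2) - |u p.2| ^ (q / 2)) ^ 2 * K (p.1 - p.2)
  have hc : 0 < 4 * (q - 1) / q ^ 2 := div_pos (by linarith) (by positivity)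
  have hw : Integrable w μ := by
    refine h_int.mono' (by fun_prop) (ae_of_all _ fun x => ?_)
    rw [norm_mul, Real.norm_eq_abs, Real.norm_eq_abs, Real.abs_rpow_of_nonneg (abs_nonneg _),
      abs_abs, abs_rpow_sub_two_mul_abs hq.ne']
  have hpointwise (p : E × E) : 4 * (q - 1) / q ^ 2 * F p ≤ energyDensity K w u p := by
    rw [← mul_assoc]
    exact mul_le_mul_of_nonneg_right (sq_abs_rpow_half_sub_le hq _ _) (hK.nonneg _)
  obtain ⟨henergy, hgreen⟩ := hK.integrable_energyDensity_and_integral_mul_levyOp hu hM hC hw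
    fun x y => (mul_nonneg hc.le (sq_nonneg _)).trans (sq_abs_rpow_half_sub_le hq (u x) (u y))
  have hF_nonneg (p : E × E) : 0 ≤ F p := mul_nonneg (sq_nonneg _) (hK.nonneg _)
  have hF : Integrable F (μ.prod μ) := by
    refine (henergy.const_mul (4 * (q - 1) / q ^ 2)⁻¹).mono' ?_ (ae_of_all _ fun p => ?_)
    · have := hK.measurable
      exact Measurable.aestronglyMeasurable (by fun_prop)
    · rw [Real.norm_of_nonneg (hF_nonneg p), le_inv_mul_iff₀ hc]
      exact hpointwise p
  refine ⟨hF, ?_⟩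
  rw [hgreen, mul_left_comm, ← integral_const_mul]
  have hmono := integral_mono (hF.const_mul (4 * (q - 1) / q ^ 2)) henergy hpointwise
  exact mul_le_mul_of_nonneg_left hmono one_half_pos.le

section FractionalLaplacian

variable {n : ℕ} {s : ℝ} {u : En n → ℝ}

lemma isLevyKernel_fracLap [NeZero n] (hs0 : 0 < s) (hs1 : s < 1) :
    IsLevyKernel (fun z : En n => (‖z‖ ^ ((n : ℝ) + 2 * s))⁻¹) volume :=
  isLevyKernel_norm_rpow_inv (by rw [finrank_euclideanSpace_fin]; linarith)
    (by rw [finrank_euclideanSpace_fin]; linarith)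

lemma fracLap_eq_mul_levyOp (x : En n) :
    fracLap n s u x = Cns n s * levyOp volume (fun z => (‖z‖ ^ ((n : ℝ) + 2 * s))⁻¹) u x := by
  rw [fracLap, levyOp]
  congr 3 with ε
  rw [nonlocalOp, ← integral_indicator (measurableSet_lt measurable_const (by fun_prop))]
  congr 1 with y
  by_cases hy : ε < ‖x - y‖ <;> simp [truncKernel, hy, div_eq_mul_inv]

lemma integral_mul_fracLap (w : En n → ℝ) :
    ∫ x, w x * fracLap n s u x =
      Cns n s * ∫ x, w x * levyOp volume (fun z => (‖z‖ ^ ((n : ℝ) + 2 * s))⁻¹) u x := by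
  simp only [fracLap_eq_mul_levyOp, mul_left_comm _ (Cns n s), integral_const_mul]

lemma Cns_nonneg (hs : 0 < s) : 0 ≤ Cns n s := by
  have := Real.Gamma_pos_of_pos (show 0 < (n : ℝ) / 2 + s by positivity)
  unfold Cns
  positivity

end FractionalLaplacian

/-- **Stroock–Varopoulos inequality** on `ℝⁿ`: for `q > 1` and `u ∈ C_c^∞(ℝⁿ)`,
`∫ |u|^{q-2} u (-Δ)^s u ≥ (4(q-1)/q²)·(C(n,s)/2)·∬ (|u(x)|^{q/2}-|u(y)|^{q/2})²/|x-y|^{n+2s}`. -/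
theorem Stroock_Varopoulos (n : ℕ) (hn : 1 ≤ n) (s : ℝ) (hs0 : 0 < s) (hs1 : s < 1)
    (q : ℝ) (hq : 1 < q)
    (u : En n → ℝ) (hu : ContDiff ℝ (⊤ : ℕ∞) u) (huc : HasCompactSupport u) :
    (∫ x, |u x| ^ (q - 2) * u x * fracLap n s u x) ≥
      (4 * (q - 1) / q ^ 2) * (Cns n s / 2) *
        ∫ p : En n × En n,
          (|u p.1| ^ (q / 2) - |u p.2| ^ (q / 2)) ^ 2 / ‖p.1 - p.2‖ ^ ((n : ℝ) + 2 * s) := by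
  have : NeZero n := ⟨by omega⟩
  obtain ⟨M, hM⟩ := huc.exists_bound_of_continuous hu.continuous
  obtain ⟨C, hC⟩ := exists_abs_secondDiff_le_mul_min (hu.of_le (WithTop.coe_le_coe.2 le_top)) huc
  have h_int : Integrable fun x => |u x| ^ (q - 1) :=
    integrable_abs_rpow_of_hasCompactSupport hu.continuous huc (sub_pos.2 hq)
  have hlevy := (Stroock_Varopoulos_general (isLevyKernel_fracLap hs0 hs1) hq
    hu.continuous.measurable hM hC h_int).2
  simp only [← div_eq_mul_inv, ← Measure.volume_eq_prod] at hlevy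
  rw [ge_iff_le, integral_mul_fracLap]
  refine (le_of_eq ?_).trans (mul_le_mul_of_nonneg_left hlevy (Cns_nonneg hs0))
  ring
end
end
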